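/- arXiv:1102.2478 — 2 statements merged into one kernel-verified Lean document; each statement's English description precedes it below -/
import Mathlib

section
/- A nonsingular complex plane projective curve of degree d ≥ 2 that is reduced and contains no line has exactly 3d(d-2) inflection points counted with multiplicity, i.e., the intersection number of the curve with its Hessian curve equals 3d(d-2). -/
open MvPolynomial

noncomputable section

/-- The Hessian polynomial of a homogeneous polynomial in three variables. -/
def hessPoly (F : MvPolynomial (Fin 3) ℂ) : MvPolynomial (Fin 3) ℂ :=
  Matrix.det (Matrix.of fun i j : Fin 3 => pderiv i (pderiv j F))

/-- The multiplicative set of polynomials not vanishing at `v`. -/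
def nonvanishing (v : Fin 3 → ℂ) : Submonoid (MvPolynomial (Fin 3) ℂ) where
  carrier := {f | aeval v f ≠ 0}
  one_mem' := by simp
  mul_mem' := by
    intro f g hf hg
    simp only [Set.mem_setOf_eq, map_mul] at *
    exact mul_ne_zero hf hg

/-- The intersection multiplicity of the curves `{F = 0}` and `{G = 0}` at the
point `v` of the affine chart `{x_i = 1}`: the ℂ-dimension of the local ring
of the plane `{x_i = 1}` at `v` modulo `(F, G)`. -/
def localMult (F G : MvPolynomial (Fin 3) ℂ) (v : Fin 3 → ℂ) (i : Fin 3) : ℕ :=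
  Module.finrank ℂ
    (Localization (nonvanishing v) ⧸
      Ideal.span {algebraMap (MvPolynomial (Fin 3) ℂ) (Localization (nonvanishing v)) F,
        algebraMap (MvPolynomial (Fin 3) ℂ) (Localization (nonvanishing v)) G,
        algebraMap (MvPolynomial (Fin 3) ℂ) (Localization (nonvanishing v)) (X i - 1)})

/-- The intersection multiplicity of `{F = 0}` and `{G = 0}` at a point of the
complex projective plane, computed in an affine chart containing the point. -/
def projMult (F G : MvPolynomial (Fin 3) ℂ) (p : Projectivization ℂ (Fin 3 → ℂ)) : ℕ :=
  let i := Classical.choose (Function.ne_iff.mp p.rep_nonzero)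
  localMult F G ((p.rep i)⁻¹ • p.rep) i

/-!
Suppose an irreducible `P` divides both `F` and its Hessian. Squarefreeness of `F` provides a zero
`v` of `P` at which `F` is smooth. The classical fact that the Hessian detects inflection then says
that every point of `P = 0` near `v` is an inflection point, so that `P = 0` is flat: a formal arc
of `P = 0` through `v`, written as the tangent line plus a deviation `φ(t)`, has `φ'' = 0`. Thus
`P = 0` contains the tangent line of `F = 0` at `v`, contrary to hypothesis. Hence `F` and its
Hessian are relatively prime, and what remains is Bézout's theorem for forms `F`, `G` of degrees
`d`, `e` without common factor. By the exact sequence `0 → S → S ⊕ S → (F, G) → 0`, the Hilbert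
function of `S / (F, G)` is `d e` in large degrees. If the linear form `l` vanishes at no common
zero of `F` and `G`, then `d e` is therefore the dimension of `S / (F, G, l - 1)`, and this Artinian
ring is the product of the local rings at the common zeros.
-/

section Derivatives

variable {σ R A : Type*}

lemma pderiv_pderiv_comm [CommRing R] (i j : σ) (f : MvPolynomial σ R) :
    pderiv i (pderiv j f) = pderiv j (pderiv i f) := by
  classical
  let D (k : σ) : Derivation R (MvPolynomial σ R) (MvPolynomial σ R) := pderiv k
  have h : ⁅D i, D j⁆ = 0 := derivation_ext fun k => by
    simp [D, Derivation.commutator_apply, Pi.single_apply, apply_ite]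
  exact sub_eq_zero.mp (DFunLike.congr_fun h f)

variable [Fintype σ]

lemma derivation_aeval [CommSemiring R] [CommSemiring A] [Algebra R A] (D : Derivation R A A)
    (γ : σ → A) (f : MvPolynomial σ R) :
    D (aeval γ f) = ∑ i, aeval γ (pderiv i f) * D (γ i) := by
  classical
  induction f using MvPolynomial.induction_on with
  | C a => simp
  | add p q hp hq => simp only [map_add, hp, hq, add_mul, Finset.sum_add_distrib]
  | mul_X p i hp =>
    simp only [map_mul, aeval_X, Derivation.leibniz, hp, pderiv_X, smul_eq_mul, map_add, add_mul,
      Finset.sum_add_distrib, Finset.mul_sum, mul_assoc]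
    congr 1
    rw [Finset.sum_eq_single i (by simp +contextual [eq_comm]) (by simp)]
    simp

lemma sum_mul_aeval_pderiv [CommRing R] [CommRing A] [Algebra R A] {d : ℕ}
    {F : MvPolynomial σ R} (hF : F.IsHomogeneous d) (γ : σ → A) :
    ∑ i, γ i * aeval γ (pderiv i F) = d * aeval γ F := by
  simpa [nsmul_eq_mul] using congrArg (aeval γ) hF.sum_X_mul_pderiv

end Derivatives

section SecondOrder

variable {A : Type*} [CommRing A]

open Matrix in
-- Expand the Gram determinant `det (M * H * Mᵀ) = (det M)² * det H` of the rows `x, y, u` of `M`.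
lemma sq_mul_dotProduct_mulVec_mem (J : Ideal A) {H : Matrix (Fin 3) (Fin 3) A} (hH : H.IsSymm)
    {x y : Fin 3 → A} (u : Fin 3 → A) (hxx : x ⬝ᵥ H *ᵥ x ∈ J) (hxy : x ⬝ᵥ H *ᵥ y ∈ J)
    (hdet : H.det ∈ J) :
    (x ⬝ᵥ H *ᵥ u) ^ 2 * (y ⬝ᵥ H *ᵥ y) ∈ J := by
  let M : Matrix (Fin 3) (Fin 3) A := of ![x, y, u]
  have gram (i j) : (M * H * Mᵀ) i j = ![x, y, u] i ⬝ᵥ H *ᵥ ![x, y, u] j := by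
    rw [Matrix.mul_assoc, Matrix.mul_apply]
    simp only [dotProduct, mulVec, M, Matrix.mul_apply, transpose_apply, of_apply]
  have hsymm (a b : Fin 3 → A) : a ⬝ᵥ H *ᵥ b = b ⬝ᵥ H *ᵥ a := by
    rw [dotProduct_mulVec, dotProduct_comm, ← mulVec_transpose, hH]
  have hM : (M * H * Mᵀ).det = H.det * M.det ^ 2 := by
    rw [det_mul, det_mul, det_transpose]; ring
  rw [det_fin_three] at hM
  simp only [gram, cons_val_zero, cons_val_one, cons_val] at hM
  rw [hsymm y x, hsymm u x, hsymm u y] at hM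
  have expand : (x ⬝ᵥ H *ᵥ u) ^ 2 * (y ⬝ᵥ H *ᵥ y) =
      ((y ⬝ᵥ H *ᵥ y) * (u ⬝ᵥ H *ᵥ u) - (y ⬝ᵥ H *ᵥ u) ^ 2) * (x ⬝ᵥ H *ᵥ x) +
      (2 * (y ⬝ᵥ H *ᵥ u) * (x ⬝ᵥ H *ᵥ u) - (x ⬝ᵥ H *ᵥ y) * (u ⬝ᵥ H *ᵥ u)) * (x ⬝ᵥ H *ᵥ y) +
      -M.det ^ 2 * H.det := by
    linear_combination -hM
  rw [expand]
  exact J.add_mem (J.add_mem (J.mul_mem_left _ hxx) (J.mul_mem_left _ hxy))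
    (J.mul_mem_left _ hdet)

lemma aeval_hessPoly [Algebra ℂ A] (F : MvPolynomial (Fin 3) ℂ) (γ : Fin 3 → A) :
    aeval γ (hessPoly F) = Matrix.det (Matrix.of fun i j => aeval γ (pderiv i (pderiv j F))) := by
  rw [hessPoly, AlgHom.map_det]
  rfl

open Matrix in
lemma sq_mul_sum_aeval_pderiv_mul_mem [Algebra ℂ A] {d : ℕ} {F : MvPolynomial (Fin 3) ℂ}
    (hF : F.IsHomogeneous d) (D : Derivation ℂ A A) (J : Ideal A) {γ : Fin 3 → A}
    (u : Fin 3 → A) (hF₀ : aeval γ F ∈ J) (hF₁ : D (aeval γ F) ∈ J)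
    (hF₂ : D (D (aeval γ F)) ∈ J) (hH : aeval γ (hessPoly F) ∈ J) :
    ((d - 1 : ℕ) * ∑ i, aeval γ (pderiv i F) * u i) ^ 2 *
      ∑ i, aeval γ (pderiv i F) * D (D (γ i)) ∈ J := by
  set n : Fin 3 → A := fun i => aeval γ (pderiv i F) with hn
  set y : Fin 3 → A := fun i => D (γ i)
  let H : Matrix (Fin 3) (Fin 3) A := of fun i j => aeval γ (pderiv i (pderiv j F))
  have hsymm : H.IsSymm := by
    ext i j
    simp only [H, transpose_apply, of_apply, pderiv_pderiv_comm i j]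
  have hHγ : H *ᵥ γ = ((d - 1 : ℕ) : A) • n := by
    funext i
    rw [Pi.smul_apply, smul_eq_mul, ← sum_mul_aeval_pderiv hF.pderiv γ]
    simp only [mulVec, dotProduct, H, of_apply]
    exact Finset.sum_congr rfl fun j _ => by rw [pderiv_pderiv_comm, mul_comm]
  have hγH (b : Fin 3 → A) : γ ⬝ᵥ H *ᵥ b = (d - 1 : ℕ) * (n ⬝ᵥ b) := by
    rw [dotProduct_mulVec, ← mulVec_transpose, hsymm, hHγ, smul_dotProduct, smul_eq_mul]
  have hnγ : n ⬝ᵥ γ = d * aeval γ F := by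
    rw [dotProduct_comm, ← sum_mul_aeval_pderiv hF γ]; rfl
  have hDF : D (aeval γ F) = n ⬝ᵥ y := derivation_aeval D γ F
  have hDn (i) : D (n i) = (H *ᵥ y) i := by
    simp only [hn, derivation_aeval D γ, pderiv_pderiv_comm _ i]
    rfl
  have hDDF : D (D (aeval γ F)) = y ⬝ᵥ H *ᵥ y + n ⬝ᵥ fun i => D (y i) := by
    simp only [hDF, dotProduct, map_sum, Derivation.leibniz, smul_eq_mul, hDn,
      Finset.sum_add_distrib]
    rw [add_comm]
  have key := sq_mul_dotProduct_mulVec_mem J hsymm (x := γ) (y := y) u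
    (by rw [hγH, hnγ]; exact J.mul_mem_left _ (J.mul_mem_left _ hF₀))
    (by rw [hγH, ← hDF]; exact J.mul_mem_left _ hF₁)
    (by rwa [← aeval_hessPoly])
  rw [hγH, eq_sub_of_add_eq hDDF.symm, mul_sub] at key
  exact (Submodule.sub_mem_iff_right _ (J.mul_mem_left _ hF₂)).mp key

end SecondOrder

section ContactCurves

lemma exists_dvd_and_pow_dvd_eval {A : Type*} [CommRing A] {π : A} (hπ : Prime π)
    {f : Polynomial A} (h₀ : π ∣ f.eval 0) (h₁ : IsCoprime (f.derivative.eval 0) π)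
    {n : ℕ} (hn : n ≠ 0) :
    ∃ φ, π ∣ φ ∧ π ^ n ∣ f.eval φ := by
  let q := algebraMap A (A ⧸ Ideal.span {π ^ n})
  have hq {a : A} : q a = 0 ↔ π ^ n ∣ a := by
    rw [← Ideal.mem_span_singleton]; exact Ideal.Quotient.eq_zero_iff_mem
  have heval (g : Polynomial A) (a : A) : Polynomial.aeval (q a) g = q (g.eval a) :=
    Polynomial.aeval_algebraMap_apply_eq_algebraMap_eval a g
  have hunit : IsUnit (Polynomial.aeval (q 0) f.derivative) := by
    obtain ⟨a, b, hab⟩ := h₁.pow_right (n := n)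
    refine IsUnit.of_mul_eq_one_right (q a) ?_
    rw [heval, ← map_mul, ← sub_eq_zero, ← map_one q, ← map_sub, hq, ← hab]
    exact ⟨-b, by ring⟩
  have hnil : IsNilpotent (Polynomial.aeval (q 0) f) :=
    ⟨n, by rw [heval, ← map_pow, hq]; exact pow_dvd_pow_of_dvd h₀ n⟩
  obtain ⟨r, ⟨⟨k, hk⟩, hr⟩, -⟩ :=
    Polynomial.existsUnique_nilpotent_sub_and_aeval_eq_zero hnil hunit
  obtain ⟨φ, rfl⟩ := Ideal.Quotient.mk_surjective r
  refine ⟨φ, ?_, hq.mp ((heval f φ).symm.trans hr)⟩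
  have hφ : π ^ n ∣ (0 - φ) ^ k := by rw [← hq, map_pow, map_sub]; exact hk
  simpa using hπ.dvd_of_dvd_pow ((dvd_pow_self π hn).trans hφ)

lemma X_pow_succ_dvd_of_X_pow_dvd_derivative {K : Type*} [CommRing K] [IsDomain K] [CharZero K]
    {f : Polynomial K} {n : ℕ} (h₀ : Polynomial.X ∣ f)
    (h : Polynomial.X ^ n ∣ Polynomial.derivative f) : Polynomial.X ^ (n + 1) ∣ f := by
  rw [Polynomial.X_pow_dvd_iff] at h ⊢
  rintro (_ | k) hk
  · exact Polynomial.X_dvd_iff.mp h₀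
  · have := h k (by omega)
    rw [Polynomial.coeff_derivative] at this
    exact (mul_eq_zero.mp this).resolve_right (by exact_mod_cast k.succ_ne_zero)

variable {σ K : Type*} [Field K]

/-- The polynomial curve `t ↦ v + t w + φ(t) u`, written in the polynomial ring `K[t]`. -/
def perturbedLine (v w u : σ → K) (φ : Polynomial K) (i : σ) : Polynomial K :=
  Polynomial.C (v i) + Polynomial.X * Polynomial.C (w i) + φ * Polynomial.C (u i)

variable {v w u : σ → K}

lemma derivative_derivative_perturbedLine (φ : Polynomial K) (i : σ) :
    Polynomial.derivative (Polynomial.derivative (perturbedLine v w u φ i)) =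
      Polynomial.C (u i) * Polynomial.derivative (Polynomial.derivative φ) := by
  rw [mul_comm]
  simp [perturbedLine]

lemma eval_aeval_perturbedLine (φ : Polynomial K) (t : K) (f : MvPolynomial σ K) :
    (aeval (perturbedLine v w u φ) f).eval t = aeval (v + t • w + φ.eval t • u) f := by
  rw [← Polynomial.coe_aeval_eq_eval, ← AlgHom.comp_apply, comp_aeval]
  congr 2
  funext i
  simp [perturbedLine, mul_comm t]

variable [Fintype σ]

lemma eval_zero_derivative_aeval_perturbedLine {φ : Polynomial K} (hφ : Polynomial.X ∣ φ)
    (f : MvPolynomial σ K) :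
    (Polynomial.derivative (aeval (perturbedLine v w u φ) f)).eval 0 =
      ∑ i, aeval v (pderiv i f) * (w i + (Polynomial.derivative φ).eval 0 * u i) := by
  have hφ₀ : φ.eval 0 = 0 := by
    rwa [← Polynomial.coeff_zero_eq_eval_zero, ← Polynomial.X_dvd_iff]
  rw [← Polynomial.derivative'_apply, derivation_aeval, Polynomial.eval_finsetSum]
  refine Finset.sum_congr rfl fun i _ => ?_
  simp [eval_aeval_perturbedLine, hφ₀, perturbedLine]

lemma X_dvd_derivative_of_X_sq_dvd_aeval_perturbedLine {f : MvPolynomial σ K}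
    (hw : ∑ i, aeval v (pderiv i f) * w i = 0) (hu : ∑ i, aeval v (pderiv i f) * u i ≠ 0)
    {φ : Polynomial K} (hφ : Polynomial.X ∣ φ)
    (hf : Polynomial.X ^ 2 ∣ aeval (perturbedLine v w u φ) f) :
    Polynomial.X ∣ Polynomial.derivative φ := by
  have h := Polynomial.pow_sub_one_dvd_derivative_of_pow_dvd hf
  rw [pow_one, Polynomial.X_dvd_iff, Polynomial.coeff_zero_eq_eval_zero] at h
  simp only [eval_zero_derivative_aeval_perturbedLine hφ, mul_add, Finset.sum_add_distrib,
    hw, zero_add, mul_left_comm _ (Polynomial.eval _ _), ← Finset.mul_sum] at h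
  rw [Polynomial.X_dvd_iff, Polynomial.coeff_zero_eq_eval_zero]
  exact (mul_eq_zero.mp h).resolve_right hu

-- Newton's method in the direction `u`, in which `P` has nonzero derivative at `v`.
lemma exists_X_pow_dvd_aeval_perturbedLine {P : MvPolynomial σ K} (hP : aeval v P = 0)
    (hu : ∑ i, aeval v (pderiv i P) * u i ≠ 0) {n : ℕ} (hn : n ≠ 0) :
    ∃ φ, Polynomial.X ∣ φ ∧ Polynomial.X ^ n ∣ aeval (perturbedLine v w u φ) P := by
  let ψ (i : σ) : Polynomial (Polynomial K) :=
    Polynomial.C (perturbedLine v w u 0 i) + Polynomial.X * Polynomial.C (Polynomial.C (u i))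
  have heval (f : MvPolynomial σ K) (φ : Polynomial K) :
      (aeval ψ f).eval φ = aeval (perturbedLine v w u φ) f := by
    rw [← Polynomial.coe_aeval_eq_eval, ← AlgHom.restrictScalars_apply K,
      ← AlgHom.comp_apply, comp_aeval]
    congr 2
    funext i
    simp [ψ, perturbedLine, mul_comm φ]
  have hderiv : (Polynomial.derivative (aeval ψ P)).eval 0 =
      ∑ i, aeval (perturbedLine v w u 0) (pderiv i P) * Polynomial.C (u i) := by
    have h := derivation_aeval (Polynomial.derivative'.restrictScalars K) ψ P
    rw [Derivation.restrictScalars_apply, Polynomial.derivative'_apply] at h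
    rw [h, Polynomial.eval_finsetSum]
    refine Finset.sum_congr rfl fun i _ => ?_
    rw [Polynomial.eval_mul, heval, Derivation.restrictScalars_apply,
      Polynomial.derivative'_apply]
    simp [ψ]
  have hcoprime : IsCoprime ((Polynomial.derivative (aeval ψ P)).eval 0) Polynomial.X := by
    refine (Polynomial.prime_X.coprime_iff_not_dvd.mpr fun h => hu ?_).symm
    rw [Polynomial.X_dvd_iff, Polynomial.coeff_zero_eq_eval_zero, hderiv,
      Polynomial.eval_finsetSum] at h
    simpa [eval_aeval_perturbedLine] using h
  obtain ⟨φ, hφ, hdvd⟩ := exists_dvd_and_pow_dvd_eval Polynomial.prime_X (f := aeval ψ P)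
    (by rw [heval, Polynomial.X_dvd_iff, Polynomial.coeff_zero_eq_eval_zero,
      eval_aeval_perturbedLine]; simpa using hP) hcoprime hn
  exact ⟨φ, hφ, heval P φ ▸ hdvd⟩

end ContactCurves

section HessianCoprime

lemma dvd_aeval_sub_aeval {σ R A : Type*} [CommSemiring R] [CommRing A] [Algebra R A]
    {a : A} {x y : σ → A} (h : ∀ i, a ∣ x i - y i) (f : MvPolynomial σ R) :
    a ∣ aeval x f - aeval y f := by
  let q := Ideal.Quotient.mkₐ R (Ideal.span {a})
  have hxy : q ∘ x = q ∘ y :=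
    funext fun i => Ideal.Quotient.eq.mpr (Ideal.mem_span_singleton.mpr (h i))
  rw [← Ideal.mem_span_singleton, ← Ideal.Quotient.eq]
  change q.comp (aeval x) f = q.comp (aeval y) f
  rw [comp_aeval, comp_aeval]
  exact congrArg (aeval · f) hxy

lemma sum_C_mul_X_dvd {σ K : Type*} [Fintype σ] [Field K] [Infinite K] {l u : σ → K}
    (hlu : ∑ i, l i * u i = 1) {f : MvPolynomial σ K}
    (hf : ∀ x : σ → K, ∑ i, l i * x i = 0 → aeval x f = 0) :
    ∑ i, C (l i) * X i ∣ f := by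
  set L : MvPolynomial σ K := ∑ i, C (l i) * X i with hL
  -- `x ↦ x - ℓ(x) u` is the projection onto the hyperplane `ℓ = 0` along `u`.
  let z (i : σ) : MvPolynomial σ K := X i - L * C (u i)
  have hz : aeval z f = 0 := MvPolynomial.funext fun x => by
    rw [map_zero, ← coe_aeval_eq_eval, RingHom.coe_coe, ← AlgHom.comp_apply, comp_aeval]
    refine hf _ ?_
    simp only [z, hL, map_sub, map_mul, map_sum, aeval_X, aeval_C, Algebra.algebraMap_self_apply,
      mul_sub, Finset.sum_sub_distrib]
    simp only [mul_left_comm (l _) (∑ _, _), ← Finset.mul_sum, hlu, mul_one, sub_self]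
  have h := dvd_aeval_sub_aeval (a := L) (x := X) (y := z) (fun i => ⟨C (u i), by simp [z]⟩) f
  rwa [hz, sub_zero, aeval_X_left_apply] at h

lemma totalDegree_pderiv_lt {σ R : Type*} [CommSemiring R] {i : σ} {f : MvPolynomial σ R}
    (hf : pderiv i f ≠ 0) : (pderiv i f).totalDegree < f.totalDegree := by
  have hpos : 0 < f.totalDegree := Nat.pos_of_ne_zero fun h =>
    hf (by rw [totalDegree_eq_zero_iff_eq_C.mp h, pderiv_C])
  refine (Finset.sup_lt_iff hpos).mpr fun m hm => ?_
  rw [mem_support_iff, coeff_pderiv] at hm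
  have h := le_totalDegree (mem_support_iff.mpr (left_ne_zero_of_mul hm))
  rw [Finsupp.sum_add_index' (fun _ => rfl) (fun _ _ _ => rfl),
    Finsupp.sum_single_index rfl] at h
  exact h

lemma exists_not_dvd_pderiv {σ R : Type*} [CommRing R] [IsDomain R] [CharZero R]
    {f : MvPolynomial σ R} (hf : f.totalDegree ≠ 0) : ∃ i, ¬ f ∣ pderiv i f := by
  obtain ⟨m, hm, i, hi⟩ : ∃ m ∈ f.support, ∃ i, m i ≠ 0 := by
    by_contra! h
    exact hf ((totalDegree_eq_zero_iff σ f).mpr h)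
  have hle : Finsupp.single i 1 ≤ m := by simpa using Nat.one_le_iff_ne_zero.mpr hi
  have hne : pderiv i f ≠ 0 := by
    refine ne_zero_iff.mpr ⟨m - Finsupp.single i 1, ?_⟩
    rw [coeff_pderiv, tsub_add_cancel_of_le hle]
    exact mul_ne_zero (mem_support_iff.mp hm) (Nat.cast_add_one_ne_zero _)
  exact ⟨i, fun h => (totalDegree_pderiv_lt hne).not_ge (totalDegree_le_of_dvd_of_isDomain h hne)⟩

lemma totalDegree_ne_zero_of_irreducible {σ K : Type*} [Field K] {P : MvPolynomial σ K}
    (hP : Irreducible P) : P.totalDegree ≠ 0 := by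
  intro h
  rw [totalDegree_eq_zero_iff_eq_C] at h
  refine hP.not_isUnit (isUnit_iff_eq_C_of_isReduced.mpr ⟨_, IsUnit.mk0 _ ?_, h⟩)
  exact fun h₀ => hP.ne_zero (by rw [h, h₀, C_0])

-- Squarefreeness makes `F` smooth somewhere on each component: if all partial derivatives of
-- `F = P * Q` vanished on `P = 0`, then `P` would divide its own partial derivatives.
lemma exists_aeval_eq_zero_and_aeval_pderiv_ne_zero {σ K : Type*} [Finite σ] [Field K]
    [IsAlgClosed K] [CharZero K] {P F : MvPolynomial σ K} (hP : Irreducible P)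
    (hF : Squarefree F) (hPF : P ∣ F) :
    ∃ v : σ → K, aeval v P = 0 ∧ ∃ i, aeval v (pderiv i F) ≠ 0 := by
  obtain ⟨Q, rfl⟩ := hPF
  obtain ⟨i, hi⟩ := exists_not_dvd_pderiv (totalDegree_ne_zero_of_irreducible hP)
  have hQ : ¬ P ∣ Q := fun h => hP.not_isUnit (hF P (mul_dvd_mul_left P h))
  have hPi : ¬ P ∣ pderiv i (P * Q) := by
    rw [pderiv_mul, dvd_add_left (dvd_mul_right P _), hP.prime.dvd_mul, not_or]
    exact ⟨hi, hQ⟩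
  have : (Ideal.span {P}).IsPrime := (Ideal.span_singleton_prime hP.ne_zero).mpr hP.prime
  rw [← Ideal.mem_span_singleton, ← IsPrime.vanishingIdeal_zeroLocus (K := K) (Ideal.span {P}),
    mem_vanishingIdeal_iff] at hPi
  push Not at hPi
  obtain ⟨v, hv, hne⟩ := hPi
  exact ⟨v, (mem_zeroLocus_iff.mp hv) P (Ideal.mem_span_singleton_self P), i, hne⟩

variable {d : ℕ} {F : MvPolynomial (Fin 3) ℂ} {v w u : Fin 3 → ℂ}

lemma X_pow_dvd_of_X_pow_dvd_aeval_perturbedLine (hd : 2 ≤ d) (hF : F.IsHomogeneous d)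
    (hw : ∑ i, aeval v (pderiv i F) * w i = 0) (hu : ∑ i, aeval v (pderiv i F) * u i ≠ 0)
    {φ : Polynomial ℂ} (hφ : Polynomial.X ∣ φ) {n : ℕ}
    (hFφ : Polynomial.X ^ (n + 2) ∣ aeval (perturbedLine v w u φ) F)
    (hHφ : Polynomial.X ^ n ∣ aeval (perturbedLine v w u φ) (hessPoly F)) :
    Polynomial.X ^ (n + 2) ∣ φ := by
  set γ := perturbedLine v w u φ with hγ
  have hFφ' := Polynomial.pow_sub_one_dvd_derivative_of_pow_dvd hFφ
  have hFφ'' := Polynomial.pow_sub_one_dvd_derivative_of_pow_dvd hFφ'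
  simp only [Nat.add_sub_cancel_right, Nat.add_succ_sub_one] at hFφ' hFφ''
  have hφ' := X_dvd_derivative_of_X_sq_dvd_aeval_perturbedLine hw hu hφ
    ((pow_dvd_pow _ (by omega)).trans hFφ)
  let s : Polynomial ℂ := ∑ i, aeval γ (pderiv i F) * Polynomial.C (u i)
  have hs : ¬ Polynomial.X ∣ (((d - 1 : ℕ) : Polynomial ℂ) * s) ^ 2 * s := by
    rw [Polynomial.X_dvd_iff, Polynomial.coeff_zero_eq_eval_zero] at hφ ⊢
    have hsu : s.eval 0 = ∑ i, aeval v (pderiv i F) * u i := by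
      simp [s, hγ, Polynomial.eval_finsetSum, eval_aeval_perturbedLine, hφ]
    simp only [Polynomial.eval_mul, Polynomial.eval_pow, hsu, Polynomial.eval_natCast]
    have : ((d - 1 : ℕ) : ℂ) ≠ 0 := Nat.cast_ne_zero.mpr (by omega)
    positivity
  have key := sq_mul_sum_aeval_pderiv_mul_mem hF Polynomial.derivative'
    (Ideal.span {Polynomial.X ^ n}) (γ := γ) (fun i => Polynomial.C (u i))
    (Ideal.mem_span_singleton.mpr ((pow_dvd_pow _ (by omega)).trans hFφ))
    (Ideal.mem_span_singleton.mpr ((pow_dvd_pow _ (by omega)).trans hFφ'))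
    (Ideal.mem_span_singleton.mpr hFφ'') (Ideal.mem_span_singleton.mpr hHφ)
  rw [Ideal.mem_span_singleton] at key
  simp only [Polynomial.derivative'_apply, hγ, derivative_derivative_perturbedLine,
    ← mul_assoc, ← Finset.sum_mul] at key
  exact X_pow_succ_dvd_of_X_pow_dvd_derivative hφ (X_pow_succ_dvd_of_X_pow_dvd_derivative hφ'
    (Polynomial.prime_X.pow_dvd_of_dvd_mul_left n hs key))

-- Newton's method finds curves through `v` of arbitrarily high contact with `P = 0`. The Hessian
-- condition makes their deviation from the tangent line of equally high order, so this line has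
-- contact of every order with `P = 0`.
lemma aeval_add_eq_zero_of_dvd_hessPoly (hd : 2 ≤ d) (hF : F.IsHomogeneous d)
    {P : MvPolynomial (Fin 3) ℂ} (hPF : P ∣ F) (hPH : P ∣ hessPoly F) (hP : aeval v P = 0)
    (hu : ∑ i, aeval v (pderiv i F) * u i ≠ 0) (hw : ∑ i, aeval v (pderiv i F) * w i = 0) :
    aeval (v + w) P = 0 := by
  have hPu : ∑ i, aeval v (pderiv i P) * u i ≠ 0 := by
    obtain ⟨Q, rfl⟩ := hPF
    simp only [pderiv_mul, map_add, map_mul, hP, zero_mul, add_zero, mul_right_comm _ (aeval v Q),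
      ← Finset.sum_mul] at hu
    exact left_ne_zero_of_mul hu
  set g := aeval (perturbedLine v w u 0) P with hg
  have contact (n : ℕ) : Polynomial.X ^ (n + 2) ∣ g := by
    obtain ⟨φ, hφ, hPφ⟩ :=
      exists_X_pow_dvd_aeval_perturbedLine (w := w) hP hPu (n := n + 2) (by omega)
    have hφn := X_pow_dvd_of_X_pow_dvd_aeval_perturbedLine hd hF hw hu hφ
      (hPφ.trans (map_dvd _ hPF))
      ((pow_dvd_pow _ (by omega)).trans (hPφ.trans (map_dvd _ hPH)))
    refine (dvd_sub_right hPφ).mp (hφn.trans (dvd_aeval_sub_aeval (fun i => ?_) P))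
    exact ⟨Polynomial.C (u i), by simp [perturbedLine]⟩
  have hg₀ : g = 0 := Polynomial.eq_zero_of_dvd_of_natDegree_lt (contact g.natDegree)
    (by rw [Polynomial.natDegree_X_pow]; omega)
  simpa [hg, eval_aeval_perturbedLine] using congrArg (Polynomial.eval 1) hg₀

theorem isRelPrime_hessPoly (hd : 2 ≤ d) (hF : F.IsHomogeneous d) (hred : Squarefree F)
    (hline : ¬ ∃ L : MvPolynomial (Fin 3) ℂ, L.IsHomogeneous 1 ∧ L ∣ F) :
    IsRelPrime F (hessPoly F) := by
  refine WfDvdMonoid.isRelPrime_of_no_irreducible_factors (fun h => hred.ne_zero h.1) ?_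
  intro P hP hPF hPH
  obtain ⟨v, hPv, i, hi⟩ := exists_aeval_eq_zero_and_aeval_pderiv_ne_zero hP hred hPF
  set l : Fin 3 → ℂ := fun j => aeval v (pderiv j F) with hl
  have hlv : ∑ j, l j * v j = 0 := by
    have hFv : aeval v F = 0 := zero_dvd_iff.mp (hPv ▸ map_dvd (aeval v) hPF)
    simpa [hl, hFv, mul_comm] using sum_mul_aeval_pderiv hF v
  have hlu : ∑ j, l j * (Pi.single i (l i)⁻¹ : Fin 3 → ℂ) j = 1 := by
    simp only [Pi.single_apply, mul_ite, mul_zero, Finset.sum_ite_eq', Finset.mem_univ, if_true]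
    exact mul_inv_cancel₀ hi
  refine hline ⟨∑ j, C (l j) * X j, IsHomogeneous.sum _ _ _ fun j _ => ?_,
    (sum_C_mul_X_dvd hlu fun x hx => ?_).trans hPF⟩
  · simpa using (isHomogeneous_C (Fin 3) (l j)).mul (isHomogeneous_X ℂ j)
  · rw [← add_sub_cancel v x]
    exact aeval_add_eq_zero_of_dvd_hessPoly hd hF hPF hPH hPv (hlu ▸ one_ne_zero)
      (show ∑ j, l j * (x - v) j = 0 by
        simp only [Pi.sub_apply, mul_sub, Finset.sum_sub_distrib, hx, hlv, sub_self])

lemma isHomogeneous_hessPoly (hF : F.IsHomogeneous d) :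
    (hessPoly F).IsHomogeneous (3 * (d - 2)) := by
  have hentry (i j : Fin 3) : (pderiv i (pderiv j F)).IsHomogeneous (d - 2) := by
    simpa [Nat.sub_sub] using (hF.pderiv (i := j)).pderiv (i := i)
  rw [hessPoly, Matrix.det_apply]
  refine IsHomogeneous.sum _ _ _ fun σ _ => ?_
  have hprod := IsHomogeneous.prod Finset.univ (fun i => pderiv (σ i) (pderiv i F))
    (fun _ => d - 2) (fun i _ => hentry _ _)
  simp only [Finset.sum_const, Finset.card_univ, Fintype.card_fin, smul_eq_mul] at hprod
  rcases Int.units_eq_one_or (Equiv.Perm.sign σ) with hσ | hσ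
  · simpa [hσ] using hprod
  · simpa [hσ] using hprod.neg

end HessianCoprime

section HilbertFunction

attribute [local instance] MvPolynomial.gradedAlgebra

variable {σ K : Type*} [Field K] {d e : ℕ} {F G : MvPolynomial σ K}

lemma homogeneousComponent_add_mul {R : Type*} [CommSemiring R] {f : MvPolynomial σ R}
    (hf : f.IsHomogeneous d) (g : MvPolynomial σ R) (n : ℕ) :
    homogeneousComponent (n + d) (g * f) = homogeneousComponent n g * f := by
  rw [← decomposition.decompose'_apply, ← decomposition.decompose'_apply]
  exact DirectSum.coe_decompose_mul_add_of_right_mem (homogeneousSubmodule σ R) hf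

lemma finrank_map_add_finrank_inf_ker {V W : Type*} [AddCommGroup V] [Module K V]
    [AddCommGroup W] [Module K W] (q : V →ₗ[K] W) (S : Submodule K V) [FiniteDimensional K S] :
    Module.finrank K (S.map q) + Module.finrank K (S ⊓ LinearMap.ker q : Submodule K V) =
      Module.finrank K S := by
  have h := LinearMap.finrank_range_add_finrank_ker (q.domRestrict S)
  rw [LinearMap.range_domRestrict] at h
  rw [← h, ← Submodule.map_comap_subtype, ← LinearMap.ker_domRestrict]
  exact congrArg _ (Submodule.equivMapOfInjective _ S.injective_subtype _).finrank_eq.symm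

/-- The space of residue classes modulo `I` of forms of degree `n`. For a homogeneous ideal `I` it
is the degree `n` part of the quotient, and its dimension is the Hilbert function of `I`; for the
ideal of an affine chart it filters the coordinate ring by degree. -/
def formsMod (I : Ideal (MvPolynomial σ K)) (n : ℕ) : Submodule K (MvPolynomial σ K ⧸ I) :=
  (homogeneousSubmodule σ K n).map (Ideal.Quotient.mkₐ K I).toLinearMap

lemma mem_formsMod {I : Ideal (MvPolynomial σ K)} {n : ℕ} {x : MvPolynomial σ K ⧸ I} :
    x ∈ formsMod I n ↔ ∃ f : MvPolynomial σ K, f.IsHomogeneous n ∧ Ideal.Quotient.mk I f = x :=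
  Iff.rfl

lemma ker_mkₐ_toLinearMap (I : Ideal (MvPolynomial σ K)) :
    LinearMap.ker (Ideal.Quotient.mkₐ K I).toLinearMap = I.restrictScalars K := by
  ext f
  exact Ideal.Quotient.eq_zero_iff_mem

lemma homogeneousSubmodule_inf_span_pair (hF : F.IsHomogeneous d) (hG : G.IsHomogeneous e)
    (n : ℕ) :
    homogeneousSubmodule σ K (n + d + e) ⊓ (Ideal.span {F, G}).restrictScalars K =
      (homogeneousSubmodule σ K (n + e)).map (LinearMap.mulRight K F) ⊔
        (homogeneousSubmodule σ K (n + d)).map (LinearMap.mulRight K G) := by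
  apply le_antisymm
  · rintro f ⟨hf, hfI⟩
    obtain ⟨a, b, rfl⟩ := Ideal.mem_span_pair.mp hfI
    rw [← homogeneousComponent_eq_self hf, map_add, homogeneousComponent_add_mul hG,
      add_right_comm, homogeneousComponent_add_mul hF]
    exact Submodule.add_mem_sup ⟨_, homogeneousComponent_mem _ _, rfl⟩
      ⟨_, homogeneousComponent_mem _ _, rfl⟩
  · refine sup_le ?_ ?_
    · rintro _ ⟨a, ha, rfl⟩
      refine ⟨?_, Ideal.mul_mem_left _ _ (Ideal.subset_span (by simp))⟩
      rw [add_right_comm]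
      exact IsHomogeneous.mul ha hF
    · rintro _ ⟨b, hb, rfl⟩
      exact ⟨IsHomogeneous.mul hb hG, Ideal.mul_mem_left _ _ (Ideal.subset_span (by simp))⟩

lemma map_mulRight_inf_map_mulRight (hF : F.IsHomogeneous d) (hG : G.IsHomogeneous e)
    (hrel : IsRelPrime F G) (n : ℕ) :
    (homogeneousSubmodule σ K (n + e)).map (LinearMap.mulRight K F) ⊓
        (homogeneousSubmodule σ K (n + d)).map (LinearMap.mulRight K G) =
      (homogeneousSubmodule σ K n).map (LinearMap.mulRight K (F * G)) := by
  apply le_antisymm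
  · rintro _ ⟨⟨a, ha, rfl⟩, b, -, hab : b * G = a * F⟩
    obtain ⟨c, rfl⟩ := hrel.symm.dvd_of_dvd_mul_right (Dvd.intro_left b hab)
    refine ⟨homogeneousComponent n c, homogeneousComponent_mem _ _, ?_⟩
    have hc : homogeneousComponent n c * G = G * c := by
      rw [← homogeneousComponent_add_mul hG, mul_comm c, homogeneousComponent_eq_self ha]
    rw [LinearMap.mulRight_apply, LinearMap.mulRight_apply, ← hc]
    ring
  · rintro _ ⟨c, hc, rfl⟩
    exact ⟨⟨c * G, IsHomogeneous.mul hc hG, by simp only [LinearMap.mulRight_apply]; ring⟩,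
      ⟨c * F, IsHomogeneous.mul hc hF, by simp only [LinearMap.mulRight_apply]; ring⟩⟩

variable [Finite σ] {I J : Ideal (MvPolynomial σ K)}

instance (n : ℕ) : FiniteDimensional K (homogeneousSubmodule σ K n) :=
  Module.Finite.iff_fg.mpr (homogeneousSubmodule_fg (σ := σ) (R := K) n)

instance (n : ℕ) : FiniteDimensional K (formsMod I n) :=
  Module.Finite.map (homogeneousSubmodule σ K n) (Ideal.Quotient.mkₐ K I).toLinearMap

lemma finrank_formsMod_add (I : Ideal (MvPolynomial σ K)) (n : ℕ) :
    Module.finrank K (formsMod I n) +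
        Module.finrank K (homogeneousSubmodule σ K n ⊓ I.restrictScalars K : Submodule K _) =
      Module.finrank K (homogeneousSubmodule σ K n) := by
  rw [← ker_mkₐ_toLinearMap]
  exact finrank_map_add_finrank_inf_ker _ _

lemma finrank_formsMod_le_of_forall_mem {n : ℕ}
    (h : ∀ f : MvPolynomial σ K, f.IsHomogeneous n → f ∈ I → f ∈ J) :
    Module.finrank K (formsMod J n) ≤ Module.finrank K (formsMod I n) := by
  have hfin : FiniteDimensional K
      (homogeneousSubmodule σ K n ⊓ J.restrictScalars K : Submodule K _) :=
    Submodule.finiteDimensional_of_le inf_le_left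
  have hle : homogeneousSubmodule σ K n ⊓ I.restrictScalars K ≤
      homogeneousSubmodule σ K n ⊓ J.restrictScalars K := fun f hf => ⟨hf.1, h f hf.1 hf.2⟩
  have := Submodule.finrank_mono hle
  have := finrank_formsMod_add I n
  have := finrank_formsMod_add J n
  omega

lemma finrank_homogeneousSubmodule_fin_three (n : ℕ) :
    Module.finrank K (homogeneousSubmodule (Fin 3) K n) = (n + 2).choose 2 := by
  have hs : {m : Fin 3 →₀ ℕ | m.degree = n} =
      ((Finset.univ : Finset (Fin 3)).finsuppAntidiag n : Set (Fin 3 →₀ ℕ)) := by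
    ext m
    simp [Finsupp.degree_eq_sum]
  have h : homogeneousSubmodule (Fin 3) K n =
      AddMonoidAlgebra.supported _ K {m : Fin 3 →₀ ℕ | m.degree = n} :=
    homogeneousSubmodule_eq_finsupp_supported (Fin 3) K n
  rw [h, hs, (AddMonoidAlgebra.supportedEquivFinsupp _).finrank_eq, Module.finrank_finsupp_self]
  simp only [Finset.coe_sort_coe, Fintype.card_coe]
  rw [Finset.card_finsuppAntidiag_nat_eq_choose,
    Finset.card_univ, Fintype.card_fin, show 3 + n - 1 = n + 2 by omega, Nat.choose_symm_add]

lemma finrank_formsMod_span_pair {F G : MvPolynomial (Fin 3) K} (hF : F.IsHomogeneous d)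
    (hG : G.IsHomogeneous e) (hF0 : F ≠ 0) (hG0 : G ≠ 0) (hrel : IsRelPrime F G) {n : ℕ}
    (hn : d + e ≤ n) : Module.finrank K (formsMod (Ideal.span {F, G}) n) = d * e := by
  obtain ⟨m, rfl⟩ : ∃ m, n = m + d + e := ⟨n - d - e, by omega⟩
  have finrank_map (k : ℕ) {P : MvPolynomial (Fin 3) K} (hP : P ≠ 0) :
      Module.finrank K ((homogeneousSubmodule (Fin 3) K k).map (LinearMap.mulRight K P)) =
        (k + 2).choose 2 := by
    rw [← finrank_homogeneousSubmodule_fin_three (K := K)]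
    exact (Submodule.equivMapOfInjective _ (mul_left_injective₀ hP) _).finrank_eq.symm
  have hsum := finrank_formsMod_add (Ideal.span {F, G}) (m + d + e)
  have hsup := Submodule.finrank_sup_add_finrank_inf_eq
    ((homogeneousSubmodule (Fin 3) K (m + e)).map (LinearMap.mulRight K F))
    ((homogeneousSubmodule (Fin 3) K (m + d)).map (LinearMap.mulRight K G))
  rw [← homogeneousSubmodule_inf_span_pair hF hG, map_mulRight_inf_map_mulRight hF hG hrel,
    finrank_map _ hF0, finrank_map _ hG0, finrank_map _ (mul_ne_zero hF0 hG0)] at hsup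
  rw [finrank_homogeneousSubmodule_fin_three] at hsum
  qify [Nat.cast_choose_two] at hsum hsup ⊢
  linear_combination hsum - hsup

end HilbertFunction

section Dehomogenization

attribute [local instance] MvPolynomial.gradedAlgebra

lemma aeval_smul_of_isHomogeneous {σ R A : Type*} [CommSemiring R] [CommSemiring A] [Algebra R A]
    {n : ℕ} {f : MvPolynomial σ R} (hf : f.IsHomogeneous n) (u : A) (x : σ → A) :
    aeval (u • x) f = u ^ n * aeval x f := by
  simp only [aeval_def, eval₂_eq, Finset.mul_sum, Pi.smul_apply, smul_eq_mul, mul_pow,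
    Finset.prod_mul_distrib, Finset.prod_pow_eq_pow_sum]
  refine Finset.sum_congr rfl fun m hm => ?_
  have hdeg : ∑ i ∈ m.support, m i = n := by
    simpa [Finsupp.weight_apply, Finsupp.sum] using hf (mem_support_iff.mp hm)
  rw [hdeg, mul_left_comm]

lemma aeval_smul_eq_zero_of_mem {σ R A : Type*} [CommSemiring R] [CommSemiring A] [Algebra R A]
    {I : Ideal (MvPolynomial σ R)} (hI : I.IsHomogeneous (homogeneousSubmodule σ R)) {x : σ → A}
    (hx : ∀ f ∈ I, aeval x f = 0) (u : A) {f : MvPolynomial σ R} (hf : f ∈ I) :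
    aeval (u • x) f = 0 := by
  rw [← sum_homogeneousComponent f, map_sum]
  refine Finset.sum_eq_zero fun n _ => ?_
  rw [aeval_smul_of_isHomogeneous (homogeneousComponent_isHomogeneous n f),
    hx _ (homogeneousComponent_mem_of_mem hI hf n), mul_zero]

lemma exists_forall_isHomogeneous_mem {σ K : Type*} [Finite σ] [Field K] [IsAlgClosed K]
    {I : Ideal (MvPolynomial σ K)} (hI : zeroLocus K I ⊆ {0}) :
    ∃ N, ∀ n ≥ N, ∀ f : MvPolynomial σ K, f.IsHomogeneous n → f ∈ I := by
  have hrad : idealOfVars σ K ≤ I.radical := by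
    rw [← vanishingIdeal_zeroLocus_eq_radical (K := K), Ideal.span_le]
    rintro _ ⟨i, rfl⟩ x hx
    simp [Set.mem_singleton_iff.mp (hI hx)]
  obtain ⟨N, hN⟩ := Ideal.exists_pow_le_of_le_radical_of_fg hrad (idealOfVars_fg σ K)
  refine ⟨N, fun n hn f hf => hN ((mem_pow_idealOfVars_iff N f).mpr fun m hm => hn.trans_eq ?_)⟩
  rw [Finsupp.degree_eq_weight_one]
  exact (hf (mem_support_iff.mp hm)).symm

/-- The ideal of the part of the locus of the homogeneous ideal `I` lying on the affine plane
`l = 1`, for a linear form `l`; this plane is the affine chart `l ≠ 0` of projective space. -/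
def chartIdeal {R : Type*} [CommRing R] (I : Ideal R) (l : R) : Ideal R := I ⊔ Ideal.span {l - 1}

lemma mk_chartIdeal_self {R : Type*} [CommRing R] (I : Ideal R) (l : R) :
    Ideal.Quotient.mk (chartIdeal I l) l = 1 := by
  rw [← map_one (Ideal.Quotient.mk _), Ideal.Quotient.eq]
  exact Ideal.mem_sup_right (Ideal.mem_span_singleton_self _)

variable {σ K : Type*} [Field K] {I : Ideal (MvPolynomial σ K)} {l : MvPolynomial σ K} {D : ℕ}

lemma chartIdeal_le_ker_aeval_iff {A : Type*} [CommRing A] [Algebra K A] {x : σ → A} :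
    chartIdeal I l ≤ RingHom.ker (aeval (R := K) x) ↔
      I ≤ RingHom.ker (aeval (R := K) x) ∧ aeval x l = 1 := by
  rw [chartIdeal, sup_le_iff, Ideal.span_singleton_le_iff_mem, RingHom.mem_ker, map_sub, map_one,
    sub_eq_zero]

lemma mk_mem_formsMod_chartIdeal (hl : l.IsHomogeneous 1) {f : MvPolynomial σ K} {n : ℕ}
    (hn : f.totalDegree ≤ n) :
    Ideal.Quotient.mk (chartIdeal I l) f ∈ formsMod (chartIdeal I l) n := by
  refine mem_formsMod.mpr ⟨∑ k ∈ Finset.range (f.totalDegree + 1),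
    l ^ (n - k) * homogeneousComponent k f, IsHomogeneous.sum _ _ _ fun k hk => ?_, ?_⟩
  · have hkn : k ≤ n := (Nat.lt_succ_iff.mp (Finset.mem_range.mp hk)).trans hn
    simpa [Nat.sub_add_cancel hkn] using
      (hl.pow (n - k)).mul (homogeneousComponent_isHomogeneous k f)
  · conv_rhs => rw [← sum_homogeneousComponent f]
    simp only [map_sum, map_mul, map_pow, mk_chartIdeal_self, one_pow, one_mul]

-- Localising `S / I` at `l`, the evaluation `X i ↦ X i / l` kills `I` and `l - 1`.
lemma exists_pow_mul_mem_of_mem_chartIdeal (hI : I.IsHomogeneous (homogeneousSubmodule σ K))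
    (hl : l.IsHomogeneous 1) {n : ℕ} {f : MvPolynomial σ K} (hf : f.IsHomogeneous n)
    (hfI : f ∈ chartIdeal I l) : ∃ m, l ^ m * f ∈ I := by
  let q := Ideal.Quotient.mk I l
  let φ : MvPolynomial σ K →ₐ[K] Localization.Away q :=
    (IsScalarTower.toAlgHom K _ _).comp (Ideal.Quotient.mkₐ K I)
  let x (i : σ) : Localization.Away q := φ (X i)
  have hx (g : MvPolynomial σ K) :
      aeval x g = algebraMap _ (Localization.Away q) (Ideal.Quotient.mk I g) :=
    (DFunLike.congr_fun (aeval_unique φ) g).symm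
  let u : Localization.Away q := IsLocalization.Away.invSelf q
  have hu : u * aeval x l = 1 := by
    rw [hx, mul_comm]
    exact IsLocalization.Away.mul_invSelf q
  have hle : chartIdeal I l ≤ RingHom.ker (aeval (R := K) (u • x)) := by
    refine chartIdeal_le_ker_aeval_iff.mpr
      ⟨fun g hg => aeval_smul_eq_zero_of_mem hI (fun h hh => ?_) u hg, ?_⟩
    · rw [hx, Ideal.Quotient.eq_zero_iff_mem.mpr hh, map_zero]
    · rw [aeval_smul_of_isHomogeneous hl, pow_one, hu]
  have hzero : aeval x f = 0 := by
    have h : u ^ n * aeval x f = 0 := by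
      rw [← aeval_smul_of_isHomogeneous hf]
      exact hle hfI
    exact ((IsUnit.of_mul_eq_one _ hu).pow n).mul_right_eq_zero.mp h
  rw [hx, IsLocalization.map_eq_zero_iff (Submonoid.powers q)] at hzero
  obtain ⟨⟨_, m, rfl⟩, hm⟩ := hzero
  exact ⟨m, Ideal.Quotient.eq_zero_iff_mem.mp (by simpa [q] using hm)⟩

variable [Finite σ]

lemma rank_quotient_chartIdeal_le (hl : l.IsHomogeneous 1) {N : ℕ}
    (hD : ∀ n ≥ N, Module.finrank K (formsMod I n) = D) :
    Module.rank K (MvPolynomial σ K ⧸ chartIdeal I l) ≤ D := by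
  refine rank_le fun s hs => ?_
  choose r hr using Ideal.Quotient.mk_surjective (I := chartIdeal I l)
  let n := max N (s.sup fun a => (r a).totalDegree)
  have hsub : Submodule.span K (s : Set _) ≤ formsMod (chartIdeal I l) n := by
    refine Submodule.span_le.mpr fun a ha => ?_
    rw [← hr a]
    exact mk_mem_formsMod_chartIdeal hl
      ((Finset.le_sup (f := fun a => (r a).totalDegree) ha).trans (le_max_right _ _))
  rw [← finrank_span_finset_eq_card hs, ← hD n (le_max_left _ _)]
  exact (Submodule.finrank_mono hsub).trans
    (finrank_formsMod_le_of_forall_mem fun f _ hf => Ideal.mem_sup_left hf)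

lemma finiteDimensional_quotient_chartIdeal (hl : l.IsHomogeneous 1) {N : ℕ}
    (hD : ∀ n ≥ N, Module.finrank K (formsMod I n) = D) :
    FiniteDimensional K (MvPolynomial σ K ⧸ chartIdeal I l) :=
  Module.rank_lt_aleph0_iff.mp
    ((rank_quotient_chartIdeal_le hl hD).trans_lt Cardinal.natCast_lt_aleph0)

-- Multiplication by `l` is surjective between large degrees of `S / I`, hence bijective since the
-- dimensions agree.
lemma exists_forall_mem_of_mul_mem [IsAlgClosed K]
    (hI : I.IsHomogeneous (homogeneousSubmodule σ K)) (hl : l.IsHomogeneous 1)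
    (hz : ∀ x ∈ zeroLocus K I, aeval x l = 0 → x = 0) {N : ℕ}
    (hD : ∀ n ≥ N, Module.finrank K (formsMod I n) = D) :
    ∃ M ≥ N, ∀ n ≥ M, ∀ f : MvPolynomial σ K, f.IsHomogeneous n → l * f ∈ I → f ∈ I := by
  obtain ⟨M, hM⟩ := exists_forall_isHomogeneous_mem (I := I ⊔ Ideal.span {l}) fun x hx =>
    hz x (fun g hg => hx g (Ideal.mem_sup_left hg))
      (hx l (Ideal.mem_sup_right (Ideal.mem_span_singleton_self l)))
  refine ⟨max M N, le_max_right _ _, fun n hn f hf hlf => ?_⟩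
  let μ : (MvPolynomial σ K ⧸ I) →ₗ[K] (MvPolynomial σ K ⧸ I) :=
    LinearMap.mulRight K (Ideal.Quotient.mk I l)
  have hsurj : formsMod I (n + 1) ≤ (formsMod I n).map μ := by
    intro y hy
    obtain ⟨g, hg, rfl⟩ := mem_formsMod.mp hy
    obtain ⟨a, ha, b, hb, rfl⟩ := Submodule.mem_sup.mp (hM (n + 1) (by omega) g hg)
    obtain ⟨c, rfl⟩ := Ideal.mem_span_singleton'.mp hb
    refine ⟨_, mem_formsMod.mpr ⟨_, homogeneousComponent_isHomogeneous n c, rfl⟩, ?_⟩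
    rw [← homogeneousComponent_eq_self hg, map_add, homogeneousComponent_add_mul hl, map_add,
      Ideal.Quotient.eq_zero_iff_mem.mpr (homogeneousComponent_mem_of_mem hI ha _), zero_add,
      map_mul]
    rfl
  have hker : (formsMod I n ⊓ LinearMap.ker μ : Submodule K _) = ⊥ := by
    have : FiniteDimensional K (formsMod I n ⊓ LinearMap.ker μ : Submodule K _) :=
      Submodule.finiteDimensional_of_le inf_le_left
    rw [← Submodule.finrank_eq_zero (R := K)]
    have := Submodule.finrank_mono hsurj
    have := finrank_map_add_finrank_inf_ker μ (formsMod I n)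
    have := hD n (by omega)
    have := hD (n + 1) (by omega)
    omega
  have hmem : Ideal.Quotient.mk I f ∈ (formsMod I n ⊓ LinearMap.ker μ : Submodule K _) := by
    refine ⟨mem_formsMod.mpr ⟨f, hf, rfl⟩, ?_⟩
    change Ideal.Quotient.mk I f * Ideal.Quotient.mk I l = 0
    rwa [← map_mul, mul_comm, Ideal.Quotient.eq_zero_iff_mem]
  rw [hker, Submodule.mem_bot] at hmem
  exact Ideal.Quotient.eq_zero_iff_mem.mp hmem

lemma finrank_quotient_chartIdeal [IsAlgClosed K]
    (hI : I.IsHomogeneous (homogeneousSubmodule σ K)) (hl : l.IsHomogeneous 1)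
    (hz : ∀ x ∈ zeroLocus K I, aeval x l = 0 → x = 0) {N : ℕ}
    (hD : ∀ n ≥ N, Module.finrank K (formsMod I n) = D) :
    Module.finrank K (MvPolynomial σ K ⧸ chartIdeal I l) = D := by
  have hfin := finiteDimensional_quotient_chartIdeal hl hD
  obtain ⟨M, hMN, hM⟩ := exists_forall_mem_of_mul_mem hI hl hz hD
  have hinj (f : MvPolynomial σ K) (hf : f.IsHomogeneous M) (hfI : f ∈ chartIdeal I l) :
      f ∈ I := by
    obtain ⟨m, hm⟩ := exists_pow_mul_mem_of_mem_chartIdeal hI hl hf hfI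
    induction m with
    | zero => simpa using hm
    | succ m ih =>
      refine ih (hM (m + M) (by omega) _ (by simpa using (hl.pow m).mul hf) ?_)
      rwa [← mul_assoc, ← pow_succ']
  apply le_antisymm
  · exact Module.finrank_le_of_rank_le (rank_quotient_chartIdeal_le hl hD)
  · rw [← hD M hMN]
    exact (finrank_formsMod_le_of_forall_mem hinj).trans (Submodule.finrank_le _)

end Dehomogenization

section LocalQuotient

attribute [local instance] MvPolynomial.gradedAlgebra

variable (J : Ideal (MvPolynomial (Fin 3) ℂ)) (v : Fin 3 → ℂ)

/-- The local ring at the point `v` of the closed subscheme of affine space cut out by `J`. It is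
the zero ring unless `v` is a zero of `J`. -/
def LocalQuotient : Type :=
  Localization (nonvanishing v) ⧸
    J.map (algebraMap (MvPolynomial (Fin 3) ℂ) (Localization (nonvanishing v)))

instance : CommRing (LocalQuotient J v) := inferInstanceAs (CommRing (_ ⧸ _))

instance : Algebra ℂ (LocalQuotient J v) :=
  inferInstanceAs (Algebra ℂ (Localization (nonvanishing v) ⧸ _))

/-- The restriction to the subscheme cut out by `J` of the rational functions regular at `v`. -/
def toLocalQuotient : Localization (nonvanishing v) →ₐ[ℂ] LocalQuotient J v :=
  Ideal.Quotient.mkₐ ℂ (J.map (algebraMap (MvPolynomial (Fin 3) ℂ) (Localization (nonvanishing v))))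

/-- The germ at `v`, as an element of `LocalQuotient J v`, of a polynomial function. -/
def germ : MvPolynomial (Fin 3) ℂ →ₐ[ℂ] LocalQuotient J v :=
  (toLocalQuotient J v).comp
    (IsScalarTower.toAlgHom ℂ (MvPolynomial (Fin 3) ℂ) (Localization (nonvanishing v)))

/-- Evaluation at `v` of the rational functions that are regular there. -/
def evalAt : Localization (nonvanishing v) →ₐ[ℂ] ℂ :=
  IsLocalization.liftAlgHom (M := nonvanishing v) (f := aeval v)
    fun f => isUnit_iff_ne_zero.mpr f.2

lemma evalAt_algebraMap (f : MvPolynomial (Fin 3) ℂ) :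
    evalAt v (algebraMap _ _ f) = aeval v f := by
  simp [evalAt]

lemma toLocalQuotient_algebraMap (f : MvPolynomial (Fin 3) ℂ) :
    toLocalQuotient J v (algebraMap _ _ f) = germ J v f :=
  rfl

variable {J v}

lemma isUnit_of_evalAt_ne_zero {b : Localization (nonvanishing v)} (hb : evalAt v b ≠ 0) :
    IsUnit b := by
  obtain ⟨f, s, rfl⟩ := IsLocalization.exists_mk'_eq (nonvanishing v) b
  have hmk := IsLocalization.mk'_spec (Localization (nonvanishing v)) f s
  have hf : aeval v f ≠ 0 := by
    rw [← evalAt_algebraMap, ← hmk, map_mul, evalAt_algebraMap]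
    exact mul_ne_zero hb s.2
  have hunit := IsLocalization.map_units (Localization (nonvanishing v))
    (⟨f, hf⟩ : nonvanishing v)
  rw [← hmk] at hunit
  exact isUnit_of_mul_isUnit_left hunit

lemma isUnit_germ {f : MvPolynomial (Fin 3) ℂ} (hf : aeval v f ≠ 0) : IsUnit (germ J v f) :=
  (IsLocalization.map_units (Localization (nonvanishing v)) (⟨f, hf⟩ : nonvanishing v)).map
    (toLocalQuotient J v)

lemma germ_eq_zero {f : MvPolynomial (Fin 3) ℂ} (hf : f ∈ J) : germ J v f = 0 :=
  Ideal.Quotient.eq_zero_iff_mem.mpr (Ideal.mem_map_of_mem _ hf)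

lemma finrank_localQuotient_eq_zero (hv : v ∉ zeroLocus ℂ J) :
    Module.finrank ℂ (LocalQuotient J v) = 0 := by
  obtain ⟨f, hf, hne⟩ : ∃ f ∈ J, aeval v f ≠ 0 := by simpa using hv
  have hunit := isUnit_germ (J := J) hne
  rw [germ_eq_zero hf, isUnit_zero_iff] at hunit
  have : Subsingleton (LocalQuotient J v) := subsingleton_of_zero_eq_one hunit
  exact Module.finrank_zero_of_subsingleton

variable {R : Type*} [CommRing R] [Algebra ℂ R]

lemma exists_algHom_comp_germ_eq {x : Fin 3 → R}
    (hu : ∀ f : MvPolynomial (Fin 3) ℂ, aeval v f ≠ 0 → IsUnit (aeval x f))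
    (hJ : J ≤ RingHom.ker (aeval (R := ℂ) x)) :
    ∃ φ : LocalQuotient J v →ₐ[ℂ] R, φ.comp (germ J v) = aeval x := by
  let ψ : Localization (nonvanishing v) →ₐ[ℂ] R :=
    IsLocalization.liftAlgHom (M := nonvanishing v) (f := aeval x) fun f => hu f f.2
  have hψ (f : MvPolynomial (Fin 3) ℂ) : ψ (algebraMap _ _ f) = aeval x f := by simp [ψ]
  have hker : J.map (algebraMap _ (Localization (nonvanishing v))) ≤ RingHom.ker ψ :=
    Ideal.map_le_iff_le_comap.mpr fun f hf => (hψ f).trans (hJ hf)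
  exact ⟨Ideal.Quotient.liftₐ _ ψ hker, AlgHom.ext hψ⟩

lemma algHom_ext_comp_germ {φ ψ : LocalQuotient J v →ₐ[ℂ] R}
    (h : φ.comp (germ J v) = ψ.comp (germ J v)) : φ = ψ := by
  have hcomp : φ.comp (toLocalQuotient J v) = ψ.comp (toLocalQuotient J v) :=
    IsLocalization.algHom_ext (nonvanishing v) h
  exact Ideal.Quotient.algHom_ext ℂ hcomp

variable {I : Ideal (MvPolynomial (Fin 3) ℂ)} {l₁ l₂ : MvPolynomial (Fin 3) ℂ}
  {v₁ v₂ : Fin 3 → ℂ}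

lemma germ_chartIdeal_self (I : Ideal (MvPolynomial (Fin 3) ℂ)) (l : MvPolynomial (Fin 3) ℂ)
    (v : Fin 3 → ℂ) : germ (chartIdeal I l) v l = 1 := by
  rw [← sub_eq_zero, ← map_one (germ _ _), ← map_sub]
  exact germ_eq_zero (Ideal.mem_sup_right (Ideal.mem_span_singleton_self _))

lemma aeval_smul_germ {n : ℕ} {f : MvPolynomial (Fin 3) ℂ} (hf : f.IsHomogeneous n)
    (u : LocalQuotient J v) :
    aeval (u • fun i => germ J v (X i)) f = u ^ n * germ J v f := by
  rw [aeval_smul_of_isHomogeneous hf]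
  exact congrArg _ (DFunLike.congr_fun (aeval_unique (germ J v)) f).symm

lemma exists_evalAt_eq_and_mul_algebraMap_eq_one {f : MvPolynomial (Fin 3) ℂ} {c : ℂ}
    (hc : c * aeval v f = 1) :
    ∃ b : Localization (nonvanishing v), evalAt v b = c ∧ b * algebraMap _ _ f = 1 := by
  have hf : evalAt v (algebraMap _ _ f) ≠ 0 := by
    rw [evalAt_algebraMap]
    exact right_ne_zero_of_mul_eq_one hc
  obtain ⟨b, hb⟩ := (isUnit_of_evalAt_ne_zero hf).exists_left_inv
  refine ⟨b, mul_right_cancel₀ hf ?_, hb⟩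
  rw [← map_mul, hb, map_one, evalAt_algebraMap, hc]

lemma isUnit_aeval_smul_germ (J : Ideal (MvPolynomial (Fin 3) ℂ))
    {b : Localization (nonvanishing v)} {f : MvPolynomial (Fin 3) ℂ}
    (hf : aeval (evalAt v b • v) f ≠ 0) :
    IsUnit (aeval (toLocalQuotient J v b • fun i => germ J v (X i)) f) := by
  let x (i : Fin 3) := algebraMap (MvPolynomial (Fin 3) ℂ) (Localization (nonvanishing v)) (X i)
  have hgerm : toLocalQuotient J v (aeval (b • x) f) =
      aeval (toLocalQuotient J v b • fun i => germ J v (X i)) f := by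
    rw [comp_aeval_apply]
    simp only [Pi.smul_apply, smul_eq_mul, map_mul, x, toLocalQuotient_algebraMap]
    rfl
  have heval : (fun i => evalAt v ((b • x) i)) = evalAt v b • v := by
    ext i
    simp [x, evalAt_algebraMap]
  rw [← hgerm]
  exact (isUnit_of_evalAt_ne_zero (by rwa [comp_aeval_apply, heval])).map _

-- On the affine planes `l₁ = 1` and `l₂ = 1` the central projection `X i ↦ X i / l₁` is the
-- transition map between the two charts.
lemma exists_algHom_comp_germ_chartIdeal (hI : I.IsHomogeneous (homogeneousSubmodule (Fin 3) ℂ))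
    (hl₁ : l₁.IsHomogeneous 1) (l₂ : MvPolynomial (Fin 3) ℂ) {c : ℂ} (hv : v₁ = c • v₂)
    (hv₁ : aeval v₁ l₁ = 1) :
    ∃ (φ : LocalQuotient (chartIdeal I l₁) v₁ →ₐ[ℂ] LocalQuotient (chartIdeal I l₂) v₂)
      (u : LocalQuotient (chartIdeal I l₂) v₂), u * germ (chartIdeal I l₂) v₂ l₁ = 1 ∧
      φ.comp (germ (chartIdeal I l₁) v₁) =
        aeval (u • fun i => germ (chartIdeal I l₂) v₂ (X i)) := by
  have hc : c * aeval v₂ l₁ = 1 := by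
    rw [← hv₁, hv, aeval_smul_of_isHomogeneous hl₁, pow_one]
  obtain ⟨b, rfl, hb⟩ := exists_evalAt_eq_and_mul_algebraMap_eq_one hc
  set u := toLocalQuotient (chartIdeal I l₂) v₂ b
  have hu : u * germ (chartIdeal I l₂) v₂ l₁ = 1 := by
    rw [← toLocalQuotient_algebraMap, ← map_mul, hb, map_one]
  have hker : chartIdeal I l₁ ≤
      RingHom.ker (aeval (R := ℂ) (u • fun i => germ (chartIdeal I l₂) v₂ (X i))) := by
    refine chartIdeal_le_ker_aeval_iff.mpr
      ⟨fun g hg => aeval_smul_eq_zero_of_mem hI (fun h hh => ?_) u hg, ?_⟩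
    · exact (DFunLike.congr_fun (aeval_unique (germ (chartIdeal I l₂) v₂)) h).symm.trans
        (germ_eq_zero (Ideal.mem_sup_left hh))
    · rw [aeval_smul_germ hl₁, pow_one, hu]
  obtain ⟨φ, hφ⟩ := exists_algHom_comp_germ_eq
    (fun f hf => isUnit_aeval_smul_germ (chartIdeal I l₂) (hv ▸ hf)) hker
  exact ⟨φ, u, hu, hφ⟩

lemma comp_eq_id_of_comp_germ_eq (hl₁ : l₁.IsHomogeneous 1)
    {φ : LocalQuotient (chartIdeal I l₁) v₁ →ₐ[ℂ] LocalQuotient (chartIdeal I l₂) v₂}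
    {u : LocalQuotient (chartIdeal I l₂) v₂} (hu : u * germ (chartIdeal I l₂) v₂ l₁ = 1)
    (hφ : φ.comp (germ (chartIdeal I l₁) v₁) =
      aeval (u • fun i => germ (chartIdeal I l₂) v₂ (X i)))
    {ψ : LocalQuotient (chartIdeal I l₂) v₂ →ₐ[ℂ] LocalQuotient (chartIdeal I l₁) v₁}
    {w : LocalQuotient (chartIdeal I l₁) v₁}
    (hψ : ψ.comp (germ (chartIdeal I l₂) v₂) =
      aeval (w • fun i => germ (chartIdeal I l₁) v₁ (X i))) :
    ψ.comp φ = AlgHom.id ℂ _ := by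
  have hψw : ψ (germ (chartIdeal I l₂) v₂ l₁) = w := by
    rw [← AlgHom.comp_apply, hψ, aeval_smul_germ hl₁, germ_chartIdeal_self, pow_one, mul_one]
  have huw : ψ u * w = 1 := by rw [← hψw, ← map_mul, hu, map_one]
  refine algHom_ext_comp_germ (MvPolynomial.algHom_ext fun i => ?_)
  calc ψ (φ.comp (germ (chartIdeal I l₁) v₁) (X i))
      = ψ u * ψ.comp (germ (chartIdeal I l₂) v₂) (X i) := by
        rw [hφ, aeval_X, Pi.smul_apply, smul_eq_mul, map_mul, AlgHom.comp_apply]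
    _ = germ (chartIdeal I l₁) v₁ (X i) := by
        rw [hψ, aeval_X, Pi.smul_apply, smul_eq_mul, ← mul_assoc, huw, one_mul]

lemma finrank_localQuotient_chartIdeal (hI : I.IsHomogeneous (homogeneousSubmodule (Fin 3) ℂ))
    (hl₁ : l₁.IsHomogeneous 1) (hl₂ : l₂.IsHomogeneous 1) {c : ℂ} (hc : c ≠ 0)
    (hv : v₁ = c • v₂) (hv₁ : aeval v₁ l₁ = 1) (hv₂ : aeval v₂ l₂ = 1) :
    Module.finrank ℂ (LocalQuotient (chartIdeal I l₁) v₁) =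
      Module.finrank ℂ (LocalQuotient (chartIdeal I l₂) v₂) := by
  obtain ⟨φ, u, hu, hφ⟩ := exists_algHom_comp_germ_chartIdeal hI hl₁ l₂ hv hv₁
  obtain ⟨ψ, w, hw, hψ⟩ :=
    exists_algHom_comp_germ_chartIdeal hI hl₂ l₁ ((eq_inv_smul_iff₀ hc).mpr hv.symm) hv₂
  exact (AlgEquiv.ofAlgHom φ ψ (comp_eq_id_of_comp_germ_eq hl₂ hw hψ hφ)
    (comp_eq_id_of_comp_germ_eq hl₁ hu hφ hψ)).toLinearEquiv.finrank_eq

end LocalQuotient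

section LocalGlobal

variable {σ K : Type*} [Field K] (J : Ideal (MvPolynomial σ K))

/-- The prime ideal of the affine coordinate ring of `J` formed by the functions that vanish at a
given zero of `J`. -/
def pointIdeal (v : zeroLocus K J) : PrimeSpectrum (MvPolynomial σ K ⧸ J) :=
  ⟨RingHom.ker (Ideal.Quotient.liftₐ J (aeval v.1) v.2), RingHom.ker_isPrime _⟩

variable {J}

lemma mk_mem_pointIdeal {v : zeroLocus K J} {f : MvPolynomial σ K} :
    Ideal.Quotient.mk J f ∈ (pointIdeal J v).asIdeal ↔ aeval v.1 f = 0 :=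
  Iff.rfl

lemma pointIdeal_injective : Function.Injective (pointIdeal J) := by
  intro v w h
  ext i
  have hv : Ideal.Quotient.mk J (X i - C (v.1 i)) ∈ (pointIdeal J v).asIdeal := by
    rw [mk_mem_pointIdeal, map_sub, aeval_X, algHom_C, Algebra.algebraMap_self_apply, sub_self]
  rw [h, mk_mem_pointIdeal, map_sub, aeval_X, algHom_C, Algebra.algebraMap_self_apply,
    sub_eq_zero] at hv
  exact hv.symm

lemma pointIdeal_surjective [Finite σ] [IsAlgClosed K] [IsArtinianRing (MvPolynomial σ K ⧸ J)] :
    Function.Surjective (pointIdeal J) := by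
  intro p
  have hmax : (p.asIdeal.comap (Ideal.Quotient.mk J)).IsMaximal :=
    Ideal.comap_isMaximal_of_surjective _ Ideal.Quotient.mk_surjective
  obtain ⟨v, hv⟩ := isMaximal_iff_eq_vanishingIdeal_singleton.mp hmax
  have hmem (f : MvPolynomial σ K) : Ideal.Quotient.mk J f ∈ p.asIdeal ↔ aeval v f = 0 := by
    rw [← Ideal.mem_comap, hv, mem_vanishingIdeal_singleton_iff]
  have hvJ : v ∈ zeroLocus K J := fun f hf =>
    (hmem f).mp (Ideal.Quotient.eq_zero_iff_mem.mpr hf ▸ p.asIdeal.zero_mem)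
  refine ⟨⟨v, hvJ⟩, PrimeSpectrum.ext (Ideal.ext fun x => ?_)⟩
  obtain ⟨f, rfl⟩ := Ideal.Quotient.mk_surjective x
  rw [hmem, mk_mem_pointIdeal]

lemma finite_zeroLocus [FiniteDimensional K (MvPolynomial σ K ⧸ J)] : Finite (zeroLocus K J) :=
  have := IsArtinianRing.of_finite K (MvPolynomial σ K ⧸ J)
  Finite.of_injective _ pointIdeal_injective

end LocalGlobal

section LocalGlobalPlane

variable {J : Ideal (MvPolynomial (Fin 3) ℂ)}

lemma algebraMapSubmonoid_nonvanishing (v : zeroLocus ℂ J) :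
    Algebra.algebraMapSubmonoid (MvPolynomial (Fin 3) ℂ ⧸ J) (nonvanishing v.1) =
      (pointIdeal J v).asIdeal.primeCompl := by
  ext x
  obtain ⟨f, rfl⟩ := Ideal.Quotient.mk_surjective x
  refine ⟨?_, fun hf => ⟨f, hf, rfl⟩⟩
  rintro ⟨g, hg, hgf⟩
  exact hgf ▸ hg

-- Localization commutes with passage to the quotient by `J`.
lemma finrank_localization_pointIdeal (v : zeroLocus ℂ J) :
    Module.finrank ℂ (Localization.AtPrime (pointIdeal J v).asIdeal) =
      Module.finrank ℂ (LocalQuotient J v.1) := by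
  let B := Localization (nonvanishing v.1) ⧸
    J.map (algebraMap (MvPolynomial (Fin 3) ℂ) (Localization (nonvanishing v.1)))
  have : IsLocalization (pointIdeal J v).asIdeal.primeCompl B := by
    rw [← algebraMapSubmonoid_nonvanishing]
    infer_instance
  let e := IsLocalization.algEquiv (pointIdeal J v).asIdeal.primeCompl
    (Localization.AtPrime (pointIdeal J v).asIdeal) B
  let e' : Localization.AtPrime (pointIdeal J v).asIdeal ≃ₐ[ℂ] LocalQuotient J v.1 :=
    AlgEquiv.ofRingEquiv (f := e.toRingEquiv) fun c => e.commutes (algebraMap ℂ _ c)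
  exact e'.toLinearEquiv.finrank_eq

lemma finrank_quotient_eq_finsum [FiniteDimensional ℂ (MvPolynomial (Fin 3) ℂ ⧸ J)] :
    Module.finrank ℂ (MvPolynomial (Fin 3) ℂ ⧸ J) =
      ∑ᶠ v : zeroLocus ℂ J, Module.finrank ℂ (LocalQuotient J v.1) := by
  have := IsArtinianRing.of_finite ℂ (MvPolynomial (Fin 3) ℂ ⧸ J)
  have := Fintype.ofFinite (PrimeSpectrum (MvPolynomial (Fin 3) ℂ ⧸ J))
  rw [IsArtinianRing.finrank_eq_sum_primeSpectrum _ ℂ, ← finsum_eq_sum_of_fintype]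
  exact (finsum_eq_of_bijective (pointIdeal J) ⟨pointIdeal_injective, pointIdeal_surjective⟩
    fun v => (finrank_localization_pointIdeal v).symm).symm

end LocalGlobalPlane

section ProjectivePoints

attribute [local instance] MvPolynomial.gradedAlgebra

variable {σ K : Type*} [Field K] {I : Ideal (MvPolynomial σ K)} {l : MvPolynomial σ K}

lemma mem_zeroLocus_chartIdeal {v : σ → K} :
    v ∈ zeroLocus K (chartIdeal I l) ↔ v ∈ zeroLocus K I ∧ aeval v l = 1 :=
  chartIdeal_le_ker_aeval_iff

lemma ne_zero_of_aeval_ne_zero (hl : l.IsHomogeneous 1) {v : σ → K} (hv : aeval v l ≠ 0) :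
    v ≠ 0 := by
  rintro rfl
  apply hv
  rw [← zero_smul K (0 : σ → K), aeval_smul_of_isHomogeneous hl, pow_one, zero_mul]

lemma inv_smul_mem_zeroLocus_chartIdeal (hI : I.IsHomogeneous (homogeneousSubmodule σ K))
    (hl : l.IsHomogeneous 1) {v : σ → K} (hv : v ∈ zeroLocus K I) (hvl : aeval v l ≠ 0) :
    (aeval v l)⁻¹ • v ∈ zeroLocus K (chartIdeal I l) :=
  mem_zeroLocus_chartIdeal.mpr ⟨fun _ hf => aeval_smul_eq_zero_of_mem hI hv _ hf, by
    rw [aeval_smul_of_isHomogeneous hl, pow_one, inv_mul_cancel₀ hvl]⟩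

/-- The point of projective space determined by a point of the affine chart `l = 1`. -/
def chartPoint (hl : l.IsHomogeneous 1) (v : zeroLocus K (chartIdeal I l)) :
    Projectivization K (σ → K) :=
  Projectivization.mk K v.1
    (ne_zero_of_aeval_ne_zero hl ((mem_zeroLocus_chartIdeal.mp v.2).2 ▸ one_ne_zero))

lemma chartPoint_injective (hl : l.IsHomogeneous 1) :
    Function.Injective (chartPoint (I := I) hl) := by
  intro v w h
  obtain ⟨a, ha⟩ := (Projectivization.mk_eq_mk_iff' K _ _ _ _).mp h
  have hal := (mem_zeroLocus_chartIdeal.mp v.2).2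
  rw [← ha, aeval_smul_of_isHomogeneous hl, (mem_zeroLocus_chartIdeal.mp w.2).2, pow_one,
    mul_one] at hal
  rw [hal, one_smul] at ha
  exact Subtype.ext ha.symm

lemma mem_range_chartPoint (hI : I.IsHomogeneous (homogeneousSubmodule σ K))
    (hl : l.IsHomogeneous 1) {p : Projectivization K (σ → K)} (hp : p.rep ∈ zeroLocus K I)
    (hpl : aeval p.rep l ≠ 0) : p ∈ Set.range (chartPoint (I := I) hl) := by
  refine ⟨⟨_, inv_smul_mem_zeroLocus_chartIdeal hI hl hp hpl⟩, ?_⟩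
  conv_rhs => rw [← p.mk_rep]
  exact (Projectivization.mk_eq_mk_iff' K _ _ _ _).mpr ⟨_, rfl⟩

lemma exists_isHomogeneous_one_forall_aeval_ne_zero [Infinite K] {ι : Type*} [Finite ι]
    {v : ι → σ → K} (hv : ∀ i, v i ≠ 0) :
    ∃ l : MvPolynomial σ K, l.IsHomogeneous 1 ∧ ∀ i, aeval (v i) l ≠ 0 := by
  refine Module.Dual.exists_forall_mem_ne_zero_of_forall_exists (homogeneousSubmodule σ K 1)
    (fun i => (aeval (v i)).toLinearMap) fun i => ?_
  obtain ⟨j, hj⟩ := Function.ne_iff.mp (hv i)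
  exact ⟨X j, isHomogeneous_X K j, by simpa using hj⟩

lemma exists_isHomogeneous_one_forall_eq_zero [Finite σ] [Infinite K]
    (hI : I.IsHomogeneous (homogeneousSubmodule σ K)) {D N : ℕ}
    (hD : ∀ n ≥ N, Module.finrank K (formsMod I n) = D) :
    ∃ l : MvPolynomial σ K, l.IsHomogeneous 1 ∧ ∀ v ∈ zeroLocus K I, aeval v l = 0 → v = 0 := by
  have (i : σ) : Finite (zeroLocus K (chartIdeal I (X i))) :=
    have := finiteDimensional_quotient_chartIdeal (isHomogeneous_X K i) hD
    finite_zeroLocus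
  obtain ⟨l, hl, hne⟩ := exists_isHomogeneous_one_forall_aeval_ne_zero
    (v := fun x : Σ i, zeroLocus K (chartIdeal I (X i)) => x.2.1) fun x =>
      ne_zero_of_aeval_ne_zero (isHomogeneous_X K x.1)
        ((mem_zeroLocus_chartIdeal.mp x.2.2).2 ▸ one_ne_zero)
  refine ⟨l, hl, fun v hv hvl => by_contra fun hv0 => ?_⟩
  obtain ⟨i, hi⟩ := Function.ne_iff.mp hv0
  have hvi : aeval v (X i : MvPolynomial σ K) ≠ 0 := by simpa using hi
  apply hne ⟨i, _, inv_smul_mem_zeroLocus_chartIdeal hI (isHomogeneous_X K i) hv hvi⟩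
  rw [aeval_smul_of_isHomogeneous hl, hvl, mul_zero]

end ProjectivePoints

section Bezout

variable {F G : MvPolynomial (Fin 3) ℂ} {d e : ℕ}

attribute [local instance] MvPolynomial.gradedAlgebra

lemma map_chartIdeal_span_pair {R S : Type*} [CommRing R] [CommRing S] (φ : R →+* S)
    (f g l : R) :
    (chartIdeal (Ideal.span {f, g}) l).map φ = Ideal.span {φ f, φ g, φ (l - 1)} := by
  rw [chartIdeal, ← Ideal.span_union, Ideal.map_span, Set.insert_union, Set.singleton_union,
    Set.image_insert_eq, Set.image_pair]

lemma localMult_eq_finrank (F G : MvPolynomial (Fin 3) ℂ) (v : Fin 3 → ℂ) (i : Fin 3) :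
    localMult F G v i =
      Module.finrank ℂ (LocalQuotient (chartIdeal (Ideal.span {F, G}) (X i)) v) := by
  rw [localMult, ← map_chartIdeal_span_pair]
  rfl

lemma exists_projMult_eq_finrank (F G : MvPolynomial (Fin 3) ℂ)
    (p : Projectivization ℂ (Fin 3 → ℂ)) :
    ∃ i, p.rep i ≠ 0 ∧ projMult F G p = Module.finrank ℂ
      (LocalQuotient (chartIdeal (Ideal.span {F, G}) (X i)) ((p.rep i)⁻¹ • p.rep)) :=
  ⟨_, Classical.choose_spec (Function.ne_iff.mp p.rep_nonzero), localMult_eq_finrank F G _ _⟩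

lemma isHomogeneous_span_pair (hF : F.IsHomogeneous d) (hG : G.IsHomogeneous e) :
    (Ideal.span {F, G}).IsHomogeneous (homogeneousSubmodule (Fin 3) ℂ) :=
  Ideal.homogeneous_span _ _ fun _ h => h.elim (fun h => ⟨d, h ▸ hF⟩) fun h => ⟨e, h ▸ hG⟩

lemma projMult_mk (hF : F.IsHomogeneous d) (hG : G.IsHomogeneous e)
    {l : MvPolynomial (Fin 3) ℂ} (hl : l.IsHomogeneous 1) {v : Fin 3 → ℂ} (hv0 : v ≠ 0)
    (hv : aeval v l = 1) :
    projMult F G (Projectivization.mk ℂ v hv0) =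
      Module.finrank ℂ (LocalQuotient (chartIdeal (Ideal.span {F, G}) l) v) := by
  obtain ⟨a, ha⟩ := Projectivization.exists_smul_eq_mk_rep ℂ v hv0
  obtain ⟨i, hi, hproj⟩ := exists_projMult_eq_finrank F G (Projectivization.mk ℂ v hv0)
  rw [hproj]
  refine finrank_localQuotient_chartIdeal (isHomogeneous_span_pair hF hG) (isHomogeneous_X ℂ i) hl
    (mul_ne_zero (inv_ne_zero hi) a.ne_zero) ?_ ?_ hv
  · rw [mul_smul, ← Units.smul_def, ha]
  · rw [aeval_X, Pi.smul_apply, smul_eq_mul, inv_mul_cancel₀ hi]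

lemma rep_mem_zeroLocus_of_projMult_ne_zero (hF : F.IsHomogeneous d) (hG : G.IsHomogeneous e)
    {p : Projectivization ℂ (Fin 3 → ℂ)} (hp : projMult F G p ≠ 0) :
    p.rep ∈ zeroLocus ℂ (Ideal.span {F, G}) := by
  obtain ⟨i, hi, hproj⟩ := exists_projMult_eq_finrank F G p
  rw [hproj] at hp
  have hmem := (mem_zeroLocus_chartIdeal.mp (not_imp_comm.mp finrank_localQuotient_eq_zero hp)).1
  intro f hf
  have hsmul := aeval_smul_eq_zero_of_mem (isHomogeneous_span_pair hF hG) hmem (p.rep i) hf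
  rwa [smul_inv_smul₀ hi] at hsmul

theorem finsum_projMult (hF : F.IsHomogeneous d) (hG : G.IsHomogeneous e) (hF0 : F ≠ 0)
    (hG0 : G ≠ 0) (hrel : IsRelPrime F G) :
    ∑ᶠ p : Projectivization ℂ (Fin 3 → ℂ), projMult F G p = d * e := by
  have hI := isHomogeneous_span_pair hF hG
  have hD (n : ℕ) (hn : n ≥ d + e) := finrank_formsMod_span_pair hF hG hF0 hG0 hrel hn
  obtain ⟨l, hl, hz⟩ := exists_isHomogeneous_one_forall_eq_zero hI hD
  have hsupp : Function.support (projMult F G) ⊆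
      Set.range (chartPoint (I := Ideal.span {F, G}) hl) := fun p hp =>
    have hmem := rep_mem_zeroLocus_of_projMult_ne_zero hF hG hp
    mem_range_chartPoint hI hl hmem fun h => p.rep_nonzero (hz _ hmem h)
  have := finiteDimensional_quotient_chartIdeal hl hD
  calc ∑ᶠ p, projMult F G p
      = ∑ᶠ p ∈ Set.range (chartPoint (I := Ideal.span {F, G}) hl), projMult F G p := by
        rw [finsum_mem_def, Set.indicator_eq_self.mpr hsupp]
    _ = ∑ᶠ v, projMult F G (chartPoint hl v) := finsum_mem_range (chartPoint_injective hl)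
    _ = ∑ᶠ v : zeroLocus ℂ (chartIdeal (Ideal.span {F, G}) l),
          Module.finrank ℂ (LocalQuotient (chartIdeal (Ideal.span {F, G}) l) v.1) :=
        finsum_congr fun v => projMult_mk hF hG hl _ (mem_zeroLocus_chartIdeal.mp v.2).2
    _ = Module.finrank ℂ (MvPolynomial (Fin 3) ℂ ⧸ chartIdeal (Ideal.span {F, G}) l) :=
        finrank_quotient_eq_finsum.symm
    _ = d * e := finrank_quotient_chartIdeal hI hl hz hD

end Bezout

lemma hessPoly_ne_zero {F : MvPolynomial (Fin 3) ℂ} {d : ℕ} (hd : d ≠ 0) (hF : F.IsHomogeneous d)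
    (hrel : IsRelPrime F (hessPoly F)) : hessPoly F ≠ 0 := by
  intro h
  rw [h, isRelPrime_zero_right] at hrel
  have hzero := aeval_smul_of_isHomogeneous hF (0 : ℂ) 0
  rw [zero_pow hd, zero_mul, zero_smul] at hzero
  exact (hrel.map (aeval (0 : Fin 3 → ℂ))).ne_zero hzero

theorem stmt_11_general {d : ℕ} (hd : 2 ≤ d) {F : MvPolynomial (Fin 3) ℂ}
    (hF : F.IsHomogeneous d) (hred : Squarefree F)
    (hline : ¬ ∃ L : MvPolynomial (Fin 3) ℂ, L.IsHomogeneous 1 ∧ L ∣ F) :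
    ∑ᶠ p : Projectivization ℂ (Fin 3 → ℂ), projMult F (hessPoly F) p = 3 * d * (d - 2) := by
  have hrel : IsRelPrime F (hessPoly F) := isRelPrime_hessPoly hd hF hred hline
  have hH0 : hessPoly F ≠ 0 := hessPoly_ne_zero (by omega) hF hrel
  rw [finsum_projMult hF (isHomogeneous_hessPoly hF) hred.ne_zero hH0 hrel]
  ring

/-- A nonsingular complex plane projective curve of degree `d ≥ 2`, reduced and
containing no line, meets its Hessian curve in exactly `3d(d-2)` points counted
with multiplicity. -/
theorem stmt_11 (d : ℕ) (hd : 2 ≤ d) (F : MvPolynomial (Fin 3) ℂ)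
    (hF : F.IsHomogeneous d)
    (hsm : ∀ v : Fin 3 → ℂ, v ≠ 0 → aeval v F = 0 → ∃ i, aeval v (pderiv i F) ≠ 0)
    (hred : Squarefree F)
    (hline : ¬ ∃ L : MvPolynomial (Fin 3) ℂ, L.IsHomogeneous 1 ∧ L ∣ F) :
    ∑ᶠ p : Projectivization ℂ (Fin 3 → ℂ), projMult F (hessPoly F) p = 3 * d * (d - 2) :=
  stmt_11_general hd hF hred hline

end
end

section
/- Any primitive regular integer triangulation of the triangle T_d can be transformed into any other by a finite sequence of flips (replacing the triangulation of a unit parallelogram formed by two adjacent primitive triangles by the other diagonal triangulation). -/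
noncomputable section

/-- Inclusion of lattice points into the plane. -/
def toRp (p : ℤ × ℤ) : ℝ × ℝ := ((p.1 : ℝ), (p.2 : ℝ))

/-- The lattice points of the triangle `T_d` with vertices `(0,0)`, `(d,0)`,
`(0,d)`. -/
def TdPts (d : ℕ) : Set (ℤ × ℤ) :=
  {p | 0 ≤ p.1 ∧ 0 ≤ p.2 ∧ p.1 + p.2 ≤ (d : ℤ)}

/-- A primitive lattice triangle: three vertices spanning integer area 1. -/
def IsPrimTriangle (t : Finset (ℤ × ℤ)) : Prop :=
  ∃ x y z : ℤ × ℤ, t = {x, y, z} ∧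
    ((y.1 - x.1) * (z.2 - x.2) - (y.2 - x.2) * (z.1 - x.1)).natAbs = 1

/-- A primitive triangulation of `T_d`: a finite set of primitive lattice
triangles with vertices in `T_d`, covering `T_d`, any two of which meet along
their common face. -/
def IsPrimTriangulation (d : ℕ) (T : Finset (Finset (ℤ × ℤ))) : Prop :=
  (∀ t ∈ T, IsPrimTriangle t ∧ (t : Set (ℤ × ℤ)) ⊆ TdPts d) ∧
  (⋃ t ∈ T, convexHull ℝ (toRp '' (t : Set (ℤ × ℤ)))) = convexHull ℝ (toRp '' TdPts d) ∧
  (∀ t ∈ T, ∀ t' ∈ T,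
    convexHull ℝ (toRp '' (t : Set (ℤ × ℤ))) ∩ convexHull ℝ (toRp '' (t' : Set (ℤ × ℤ))) =
      convexHull ℝ (toRp '' ((t ∩ t' : Finset (ℤ × ℤ)) : Set (ℤ × ℤ))))

/-- Regularity (convexity) of a triangulation of `T_d`: it is induced by the
domains of linearity of a convex piecewise-linear function on `T_d`. -/
def IsRegularTriangulation (d : ℕ) (T : Finset (Finset (ℤ × ℤ))) : Prop :=
  ∃ ν : ℤ × ℤ → ℝ, ∀ t ∈ T, ∃ u : ℝ × ℝ, ∃ r : ℝ,
    (∀ p ∈ t, u.1 * (p.1 : ℝ) + u.2 * (p.2 : ℝ) + r = ν p) ∧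
    (∀ q ∈ TdPts d, q ∉ t → u.1 * (q.1 : ℝ) + u.2 * (q.2 : ℝ) + r < ν q)

/-- A flip: two primitive triangles of `T` sharing an edge and forming a unit
parallelogram are replaced by the triangulation along the other diagonal. -/
def IsFlip (T T' : Finset (Finset (ℤ × ℤ))) : Prop :=
  ∃ x y z w : ℤ × ℤ,
    ({x, y, z} : Finset (ℤ × ℤ)) ∈ T ∧ ({x, y, w} : Finset (ℤ × ℤ)) ∈ T ∧
    z ≠ w ∧ z + w = x + y ∧
    T' = (T \ {({x, y, z} : Finset (ℤ × ℤ)), ({x, y, w} : Finset (ℤ × ℤ))}) ∪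
      {({x, z, w} : Finset (ℤ × ℤ)), ({y, z, w} : Finset (ℤ × ℤ))}

/-!
Give `ℤ × ℤ` the hexagonal quadratic form `x² + xy + y²`. By Heron's formula, in a primitive
triangle the angle opposite to a longest edge is obtuse, unless all edges have length `1`. Hence if
a triangulation has an edge longer than `1`, take a longest one: it is not a boundary edge of `T_d`,
and the two triangles along it are obtuse opposite to it, which forces their union to be a
parallelogram. Flipping replaces the edge by the shorter diagonal, so the total squared length of
the edges drops, and after finitely many flips all edges have length `1`. There is only one such
triangulation: its triangle around a point `p` consists of lattice points `v` whose coordinates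
and coordinate sum are within `1` of those of `p`, which leaves only three candidates if `p` is
generic. Since flips are reversible, any two triangulations are connected through it.

Points on no rational line, called generic, are dense and avoid all edges, so the exchange of
triangles in a flip can be checked on such points alone; there, lying in exactly one triangle
replaces the face-to-face condition.
-/

open Topology

section Orient

variable {R : Type*} [CommRing R]

/-- Twice the signed area of the triangle `abc`, positive when `a`, `b`, `c` are in counterclockwise
order. It is used for lattice points (`R = ℤ`) and for points of the plane (`R = ℝ`) alike. -/
def orient (a b c : R × R) : R := (b.1 - a.1) * (c.2 - a.2) - (b.2 - a.2) * (c.1 - a.1)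

lemma orient_rotate (a b c : R × R) : orient b c a = orient a b c := by
  unfold orient; ring

lemma orient_swap (a b c : R × R) : orient b a c = -orient a b c := by
  unfold orient; ring

@[simp] lemma orient_self_left (a b : R × R) : orient a b a = 0 := by
  unfold orient; ring

@[simp] lemma orient_self_right (a b : R × R) : orient a b b = 0 := by
  unfold orient; ring

lemma orient_add_orient_add_orient (a b c p : R × R) :
    orient b c p + orient c a p + orient a b p = orient a b c := by
  unfold orient; ring

/-- Cramer's rule. -/
lemma orient_smul_eq (a b c p : R × R) :
    orient a b c • p = orient b c p • a + orient c a p • b + orient a b p • c := by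
  ext <;> simp only [orient, Prod.smul_fst, Prod.smul_snd, Prod.fst_add, Prod.snd_add,
    smul_eq_mul] <;> ring

lemma orient_smul_add_smul (a b p q : R × R) {s t : R} (hst : s + t = 1) :
    orient a b (s • p + t • q) = s * orient a b p + t * orient a b q := by
  obtain rfl : s = 1 - t := by linear_combination hst
  simp only [orient, Prod.smul_fst, Prod.smul_snd, Prod.fst_add, Prod.snd_add, smul_eq_mul]
  ring

lemma ne_of_orient_ne_zero {a b c : R × R} (h : orient a b c ≠ 0) : a ≠ b ∧ b ≠ c ∧ c ≠ a := by
  refine ⟨?_, ?_, ?_⟩ <;> rintro rfl <;> simp [orient, mul_comm] at h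

end Orient

section OrientConvex

variable {K : Type*} [Field K] [LinearOrder K] [IsStrictOrderedRing K]

lemma convex_setOf_orient_nonneg (a b : K × K) : Convex K {p | 0 ≤ orient a b p} := by
  intro p hp q hq s t hs ht hst
  rw [Set.mem_ofPred_eq] at hp hq ⊢
  rw [orient_smul_add_smul a b p q hst]
  positivity

lemma orient_pos_of_mem_openSegment {a b p q r : K × K} (hp : 0 ≤ orient a b p)
    (hq : 0 < orient a b q) (hr : r ∈ openSegment K p q) : 0 < orient a b r := by
  obtain ⟨s, t, hs, ht, hst, rfl⟩ := hr
  rw [orient_smul_add_smul a b p q hst]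
  positivity

lemma mem_convexHull_triple_iff {a b c : K × K} (h : 0 < orient a b c) (p : K × K) :
    p ∈ convexHull K {a, b, c} ↔ 0 ≤ orient a b p ∧ 0 ≤ orient b c p ∧ 0 ≤ orient c a p := by
  constructor
  · have side_nonneg (u v : K × K) (hu : 0 ≤ orient u v a) (hv : 0 ≤ orient u v b)
        (hw : 0 ≤ orient u v c) (hp : p ∈ convexHull K {a, b, c}) : 0 ≤ orient u v p := by
      refine convexHull_min ?_ (convex_setOf_orient_nonneg u v) hp
      rintro _ (rfl | rfl | rfl) <;> assumption
    exact fun hp => ⟨side_nonneg a b (by simp) (by simp) h.le hp,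
      side_nonneg b c (by rw [orient_rotate]; exact h.le) (by simp) (by simp) hp,
      side_nonneg c a (by simp) (by rw [← orient_rotate]; exact h.le) (by simp) hp⟩
  · rintro ⟨hab, hbc, hca⟩
    have hp : p = (orient b c p / orient a b c) • a + (orient c a p / orient a b c) • b +
        (orient a b p / orient a b c) • c := by
      simp only [div_eq_inv_mul, mul_smul, ← smul_add]
      rw [← orient_smul_eq, inv_smul_smul₀ h.ne']
    have weights_sum : orient b c p / orient a b c + orient c a p / orient a b c +
        orient a b p / orient a b c = 1 := by
      rw [← add_div, ← add_div, orient_add_orient_add_orient, div_self h.ne']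
    have := (convex_convexHull K {a, b, c}).sum_mem (t := Finset.univ) (z := ![a, b, c])
      (w := ![orient b c p / orient a b c, orient c a p / orient a b c,
        orient a b p / orient a b c])
      (by intro i _; fin_cases i; exacts [div_nonneg hbc h.le, div_nonneg hca h.le,
        div_nonneg hab h.le])
      (by simpa [Fin.sum_univ_three] using weights_sum)
      (by intro i _; apply subset_convexHull; fin_cases i <;> simp)
    rw [hp]
    simpa [Fin.sum_univ_three] using this

end OrientConvex

lemma continuous_orient (a b : ℝ × ℝ) : Continuous (orient a b) := by
  unfold orient; fun_prop

lemma isOpen_setOf_orient_pos (a b : ℝ × ℝ) : IsOpen {p | 0 < orient a b p} :=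
  isOpen_lt continuous_const (continuous_orient a b)

lemma mem_closure_of_openSegment_subset {E : Type*} [AddCommGroup E] [Module ℝ E]
    [TopologicalSpace E] [ContinuousAdd E] [ContinuousSMul ℝ E] {s : Set E} {p q : E}
    (h : openSegment ℝ p q ⊆ s) : p ∈ closure s :=
  closure_mono h (segment_subset_closure_openSegment (left_mem_segment ℝ p q))

lemma exists_orient_pos {a b : ℝ × ℝ} (hab : a ≠ b) : ∃ c, 0 < orient a b c := by
  refine ⟨a + (-(b.2 - a.2), b.1 - a.1), ?_⟩
  have hne : b.1 - a.1 ≠ 0 ∨ b.2 - a.2 ≠ 0 := by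
    contrapose! hab
    exact Prod.ext (by linarith [hab.1]) (by linarith [hab.2])
  have h : orient a b (a + (-(b.2 - a.2), b.1 - a.1)) = (b.1 - a.1) ^ 2 + (b.2 - a.2) ^ 2 := by
    simp only [orient, Prod.fst_add, Prod.snd_add]; ring
  rw [h]
  rcases hne with hne | hne <;> positivity

lemma mem_closure_setOf_orient_pos {a b p : ℝ × ℝ} (hab : a ≠ b) (hp : 0 ≤ orient a b p) :
    p ∈ closure {q | 0 < orient a b q} :=
  let ⟨_, hc⟩ := exists_orient_pos hab
  mem_closure_of_openSegment_subset fun _ hr => orient_pos_of_mem_openSegment hp hc hr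

lemma orient_midpoint (a b p q : ℝ × ℝ) :
    orient a b (midpoint ℝ p q) = (orient a b p + orient a b q) / 2 := by
  rw [midpoint_eq_smul_add, smul_add, orient_smul_add_smul a b p q (by norm_num), invOf_eq_inv]
  ring

/-- A point of the plane is generic if it lies on no line with rational coefficients. Such points
avoid all edges between lattice points, so they lie in the interior of every lattice polygon
containing them. -/
def IsGeneric (p : ℝ × ℝ) : Prop :=
  ∀ u v c : ℤ, (u : ℝ) * p.1 + v * p.2 = c → u = 0 ∧ v = 0

lemma dense_setOf_isGeneric : Dense {p | IsGeneric p} := by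
  have h : {p | IsGeneric p} = ⋂ l : {l : ℤ × ℤ × ℤ // ¬ (l.1 = 0 ∧ l.2.1 = 0)},
      {p : ℝ × ℝ | (l.1.1 : ℝ) * p.1 + l.1.2.1 * p.2 ≠ l.1.2.2} := by
    ext p
    simp only [Set.mem_iInter, Set.mem_ofPred_eq, Subtype.forall, Prod.forall, IsGeneric]
    exact forall₃_congr fun u v c => by tauto
  rw [h]
  refine dense_iInter_of_isOpen (fun l => isOpen_ne_fun (by fun_prop) (by fun_prop)) ?_
  rintro ⟨⟨u, v, c⟩, huv⟩ p
  by_cases hp : (u : ℝ) * p.1 + v * p.2 = c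
  · refine mem_closure_of_openSegment_subset (q := p + ((u : ℝ), (v : ℝ))) ?_
    rintro _ ⟨s, t, -, ht, hst, rfl⟩
    have hpos : 0 < (u : ℝ) ^ 2 + (v : ℝ) ^ 2 := by
      rcases not_and_or.mp huv with hu | hv <;> positivity
    obtain rfl : s = 1 - t := by linarith
    simp only [Set.mem_ofPred_eq, Prod.smul_fst, Prod.smul_snd, Prod.fst_add, Prod.snd_add,
      smul_eq_mul]
    nlinarith [mul_pos ht hpos]
  · exact subset_closure hp

lemma mem_closure_inter_isGeneric {W : Set (ℝ × ℝ)} (hW : IsOpen W) {m : ℝ × ℝ}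
    (hm : m ∈ closure W) : m ∈ closure (W ∩ {p | IsGeneric p}) :=
  closure_minimal (dense_setOf_isGeneric.open_subset_closure_inter hW) isClosed_closure hm

lemma IsGeneric.orient_ne_zero {p : ℝ × ℝ} (hp : IsGeneric p) {a b : ℤ × ℤ} (hab : a ≠ b) :
    orient (toRp a) (toRp b) p ≠ 0 := by
  intro h
  obtain ⟨h₁, h₂⟩ := hp (-(b.2 - a.2)) (b.1 - a.1) ((b.1 - a.1) * a.2 - (b.2 - a.2) * a.1)
    (by simp only [orient, toRp] at h; push_cast; linarith)
  exact hab (Prod.ext (by lia) (by lia))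

lemma toRp_injective : Function.Injective toRp := fun p q h => by
  simpa [toRp, Prod.ext_iff] using h

lemma orient_toRp (a b c : ℤ × ℤ) : orient (toRp a) (toRp b) (toRp c) = orient a b c := by
  simp [orient, toRp]

/-- The convex hull in the plane of a set of lattice points. -/
def latticeHull (S : Set (ℤ × ℤ)) : Set (ℝ × ℝ) := convexHull ℝ (toRp '' S)

lemma latticeHull_mono {S S' : Set (ℤ × ℤ)} (h : S ⊆ S') : latticeHull S ⊆ latticeHull S' :=
  convexHull_mono (Set.image_mono h)

lemma isClosed_latticeHull (t : Finset (ℤ × ℤ)) : IsClosed (latticeHull t) :=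
  ((t.finite_toSet.image toRp).isCompact_convexHull (𝕜 := ℝ)).isClosed

lemma orient_nonneg_of_mem_latticeHull {S : Set (ℤ × ℤ)} {a b : ℤ × ℤ} {p : ℝ × ℝ}
    (hS : ∀ q ∈ S, 0 ≤ orient a b q) (hp : p ∈ latticeHull S) :
    0 ≤ orient (toRp a) (toRp b) p := by
  refine convexHull_min ?_ (convex_setOf_orient_nonneg (toRp a) (toRp b)) hp
  rintro _ ⟨q, hq, rfl⟩
  rw [Set.mem_ofPred_eq, orient_toRp]
  exact_mod_cast hS q hq

section Triangle

variable {a b c : ℤ × ℤ}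

lemma mem_latticeHull_triple_iff (h : orient a b c = 1) (p : ℝ × ℝ) :
    p ∈ latticeHull ({a, b, c} : Finset (ℤ × ℤ)) ↔ 0 ≤ orient (toRp a) (toRp b) p ∧
      0 ≤ orient (toRp b) (toRp c) p ∧ 0 ≤ orient (toRp c) (toRp a) p := by
  have hpos : 0 < orient (toRp a) (toRp b) (toRp c) := by simp [orient_toRp, h]
  simpa [latticeHull, Set.image_insert_eq] using mem_convexHull_triple_iff hpos p

lemma IsGeneric.mem_latticeHull_triple_iff_pos {p : ℝ × ℝ} (hp : IsGeneric p)
    (h : orient a b c = 1) :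
    p ∈ latticeHull ({a, b, c} : Finset (ℤ × ℤ)) ↔ 0 < orient (toRp a) (toRp b) p ∧
      0 < orient (toRp b) (toRp c) p ∧ 0 < orient (toRp c) (toRp a) p := by
  obtain ⟨hab, hbc, hca⟩ := ne_of_orient_ne_zero (h.trans_ne one_ne_zero)
  rw [mem_latticeHull_triple_iff h, (hp.orient_ne_zero hab).symm.le_iff_lt,
    (hp.orient_ne_zero hbc).symm.le_iff_lt, (hp.orient_ne_zero hca).symm.le_iff_lt]

lemma isPrimTriangle_of_orient_eq_one (h : orient a b c = 1) : IsPrimTriangle {a, b, c} :=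
  ⟨a, b, c, rfl, Int.natAbs_eq_iff.mpr (Or.inl h)⟩

lemma triple_rotate (a b c : ℤ × ℤ) : ({b, c, a} : Finset (ℤ × ℤ)) = {a, b, c} := by
  rw [Finset.pair_comm c a, Finset.insert_comm]

end Triangle

namespace IsPrimTriangle

variable {t : Finset (ℤ × ℤ)}

lemma exists_orient_eq_one (ht : IsPrimTriangle t) :
    ∃ a b c, t = {a, b, c} ∧ orient a b c = 1 := by
  obtain ⟨x, y, z, rfl, h⟩ := ht
  rcases Int.natAbs_eq_iff.mp h with h | h
  · exact ⟨x, y, z, rfl, h⟩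
  · refine ⟨y, x, z, Finset.insert_comm .., ?_⟩
    rw [orient_swap]
    exact neg_eq_iff_eq_neg.mpr h

lemma exists_orient_eq_one_of_mem (ht : IsPrimTriangle t) {c : ℤ × ℤ} (hc : c ∈ t) :
    ∃ a b, t = {a, b, c} ∧ orient a b c = 1 := by
  obtain ⟨x, y, z, rfl, h⟩ := ht.exists_orient_eq_one
  simp only [Finset.mem_insert, Finset.mem_singleton] at hc
  rcases hc with rfl | rfl | rfl
  · exact ⟨y, z, (triple_rotate ..).symm, by rwa [orient_rotate]⟩
  · exact ⟨z, x, triple_rotate .., by rwa [← orient_rotate]⟩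
  · exact ⟨x, y, rfl, h⟩

lemma card_eq_three (ht : IsPrimTriangle t) : t.card = 3 := by
  obtain ⟨a, b, c, rfl, h⟩ := ht.exists_orient_eq_one
  obtain ⟨hab, hbc, hca⟩ := ne_of_orient_ne_zero (h.trans_ne one_ne_zero)
  exact Finset.card_eq_three.mpr ⟨a, b, c, hab, hca.symm, hbc, rfl⟩

end IsPrimTriangle

section Midpoint

variable {a b c x y z : ℤ × ℤ}

lemma eventually_mem_latticeHull_triple (h : orient a b c = 1) :
    ∀ᶠ p in 𝓝 (midpoint ℝ (toRp a) (toRp b)),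
      0 < orient (toRp a) (toRp b) p → p ∈ latticeHull ({a, b, c} : Finset (ℤ × ℤ)) := by
  have hbc : midpoint ℝ (toRp a) (toRp b) ∈ {p | 0 < orient (toRp b) (toRp c) p} := by
    simp [orient_midpoint, orient_toRp, orient_rotate a b c, h]
  have hca : midpoint ℝ (toRp a) (toRp b) ∈ {p | 0 < orient (toRp c) (toRp a) p} := by
    simp [orient_midpoint, orient_toRp, ← orient_rotate c a b, h]
  filter_upwards [(isOpen_setOf_orient_pos _ _).mem_nhds hbc,
    (isOpen_setOf_orient_pos _ _).mem_nhds hca] with p hbc hca hab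
  exact (mem_latticeHull_triple_iff h p).mpr ⟨hab.le, hbc.le, hca.le⟩

lemma IsPrimTriangle.exists_isGeneric_mem {t : Finset (ℤ × ℤ)} (ht : IsPrimTriangle t) :
    ∃ p, IsGeneric p ∧ p ∈ latticeHull t := by
  obtain ⟨a, b, c, rfl, h⟩ := ht.exists_orient_eq_one
  have hab : toRp a ≠ toRp b := toRp_injective.ne (ne_of_orient_ne_zero (h.trans_ne one_ne_zero)).1
  have hm : midpoint ℝ (toRp a) (toRp b) ∈ closure {p | 0 < orient (toRp a) (toRp b) p} :=
    mem_closure_setOf_orient_pos hab (by simp [orient_midpoint])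
  obtain ⟨p, ⟨hpos, hp⟩, hmem⟩ := ((mem_closure_iff_frequently.mp <| mem_closure_inter_isGeneric
    (isOpen_setOf_orient_pos _ _) hm).and_eventually (eventually_mem_latticeHull_triple h)).exists
  exact ⟨p, hp, hmem hpos⟩

lemma toRp_add (p q : ℤ × ℤ) : toRp (p + q) = toRp p + toRp q := by
  simp [toRp]

/-- Near the common midpoint each triangle is a half plane, and two half planes through the same
point overlap unless they are opposite. -/
lemma exists_isGeneric_mem_inter_of_add_eq (h : orient x y z = 1) (h' : orient a b c = 1)
    (hab : a + b = x + y) (hcross : orient x y a ≠ 0) :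
    ∃ p, IsGeneric p ∧ p ∈ latticeHull ({x, y, z} : Finset (ℤ × ℤ)) ∧
      p ∈ latticeHull ({a, b, c} : Finset (ℤ × ℤ)) := by
  obtain rfl : b = x + y - a := by rw [← hab, add_sub_cancel_left]
  have hmid : midpoint ℝ (toRp x) (toRp y) = midpoint ℝ (toRp a) (toRp (x + y - a)) := by
    rw [midpoint_eq_smul_add, midpoint_eq_smul_add, ← toRp_add, ← toRp_add, hab]
  obtain ⟨q, hq, hq'⟩ : ∃ q, 0 < orient x y q ∧ 0 < orient a (x + y - a) q := by
    rcases hcross.lt_or_gt with hneg | hpos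
    · refine ⟨(2 : ℤ) • x - a, ?_, ?_⟩ <;>
        simp only [orient, Prod.fst_add, Prod.snd_add, Prod.fst_sub, Prod.snd_sub, Prod.smul_fst,
          Prod.smul_snd, smul_eq_mul] at hneg ⊢ <;> linarith
    · refine ⟨a + y - x, ?_, ?_⟩ <;>
        simp only [orient, Prod.fst_add, Prod.snd_add, Prod.fst_sub, Prod.snd_sub] at hpos ⊢ <;>
        linarith
  set W := {p | 0 < orient (toRp x) (toRp y) p} ∩ {p | 0 < orient (toRp a) (toRp (x + y - a)) p}
  have hmW : midpoint ℝ (toRp x) (toRp y) ∈ closure W := by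
    refine mem_closure_of_openSegment_subset (q := toRp q) fun r hr => ⟨?_, ?_⟩
    · exact orient_pos_of_mem_openSegment (by simp [orient_midpoint])
        (by rw [orient_toRp]; exact_mod_cast hq) hr
    · exact orient_pos_of_mem_openSegment (by simp [hmid, orient_midpoint])
        (by rw [orient_toRp]; exact_mod_cast hq') hr
  have hWopen : IsOpen W := (isOpen_setOf_orient_pos _ _).inter (isOpen_setOf_orient_pos _ _)
  obtain ⟨p, ⟨⟨hpos, hpos'⟩, hp⟩, hmem, hmem'⟩ :=
    ((mem_closure_iff_frequently.mp (mem_closure_inter_isGeneric hWopen hmW)).and_eventually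
      ((eventually_mem_latticeHull_triple h).and
        (hmid ▸ eventually_mem_latticeHull_triple h'))).exists
  exact ⟨p, hp, hmem hpos, hmem' hpos'⟩

lemma add_ne_two_smul_of_orient_eq_one (h : orient x y z = 1) (v : ℤ × ℤ) :
    x + y ≠ (2 : ℤ) • v := by
  intro hv
  obtain rfl : y = (2 : ℤ) • v - x := by rw [← hv, add_sub_cancel_left]
  have : 2 * orient x v z = 1 := by
    rw [← h]; simp only [orient, Prod.fst_sub, Prod.snd_sub, Prod.smul_fst, Prod.smul_snd,
      smul_eq_mul]; ring
  omega

lemma exists_barycentric_of_midpoint_mem (habc : orient a b c = 1)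
    (hm : midpoint ℝ (toRp x) (toRp y) ∈ latticeHull ({a, b, c} : Finset (ℤ × ℤ))) :
    ∃ α β γ : ℤ, 0 ≤ α ∧ 0 ≤ β ∧ 0 ≤ γ ∧ α + β + γ = 2 ∧ x + y = α • a + β • b + γ • c := by
  obtain ⟨hab, hbc, hca⟩ := (mem_latticeHull_triple_iff habc _).mp hm
  have coord_nonneg {u v : ℤ × ℤ}
      (huv : 0 ≤ orient (toRp u) (toRp v) (midpoint ℝ (toRp x) (toRp y))) :
      0 ≤ orient u v x + orient u v y := by
    rw [orient_midpoint, orient_toRp, orient_toRp] at huv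
    have : (0 : ℝ) ≤ orient u v x + orient u v y := by linarith
    exact_mod_cast this
  refine ⟨orient b c x + orient b c y, orient c a x + orient c a y, orient a b x + orient a b y,
    coord_nonneg hbc, coord_nonneg hca, coord_nonneg hab, ?_, ?_⟩
  · linear_combination orient_add_orient_add_orient a b c x +
      orient_add_orient_add_orient a b c y + 2 * habc
  · have hx := orient_smul_eq a b c x
    have hy := orient_smul_eq a b c y
    rw [habc, one_smul] at hx hy
    rw [add_smul, add_smul, add_smul]
    nth_rw 1 [hx, hy]
    abel

lemma exists_edge_of_midpoint_mem (h : orient x y z = 1) {t : Finset (ℤ × ℤ)}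
    (ht : IsPrimTriangle t) (hm : midpoint ℝ (toRp x) (toRp y) ∈ latticeHull t) :
    ∃ a b c, t = {a, b, c} ∧ orient a b c = 1 ∧ a + b = x + y := by
  obtain ⟨a, b, c, rfl, habc⟩ := ht.exists_orient_eq_one
  obtain ⟨α, β, γ, hα, hβ, hγ, hsum, hxy⟩ := exists_barycentric_of_midpoint_mem habc hm
  have hodd := add_ne_two_smul_of_orient_eq_one h
  have coords : (α = 1 ∧ β = 1 ∧ γ = 0) ∨ (α = 0 ∧ β = 1 ∧ γ = 1) ∨ (α = 1 ∧ β = 0 ∧ γ = 1) ∨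
      (α = 2 ∧ β = 0 ∧ γ = 0) ∨ (α = 0 ∧ β = 2 ∧ γ = 0) ∨ (α = 0 ∧ β = 0 ∧ γ = 2) := by lia
  rcases coords with ⟨rfl, rfl, rfl⟩ | ⟨rfl, rfl, rfl⟩ | ⟨rfl, rfl, rfl⟩ | ⟨rfl, rfl, rfl⟩ |
    ⟨rfl, rfl, rfl⟩ | ⟨rfl, rfl, rfl⟩
  · exact ⟨a, b, c, rfl, habc, by simp [hxy]⟩
  · exact ⟨b, c, a, (triple_rotate ..).symm, by rwa [orient_rotate], by simp [hxy]⟩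
  · exact ⟨c, a, b, triple_rotate .., by rwa [← orient_rotate], by simp [hxy, add_comm]⟩
  · exact (hodd a (by simpa using hxy)).elim
  · exact (hodd b (by simpa using hxy)).elim
  · exact (hodd c (by simpa using hxy)).elim

lemma exists_eq_add_smul_of_orient_eq_zero (h : orient x y z = 1) (ha : orient x y a = 0) :
    ∃ n : ℤ, a = x + n • (y - x) := by
  have hyz : orient y z a = 1 - orient z x a := by
    linarith [orient_add_orient_add_orient x y z a]
  have hsmul := orient_smul_eq x y z a
  rw [h, ha, hyz, one_smul, zero_smul, add_zero] at hsmul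
  exact ⟨orient z x a, hsmul.trans (by module)⟩

lemma eq_or_eq_of_add_eq_of_orient_eq_zero (h : orient x y z = 1) (h' : orient a b c = 1)
    (hab : a + b = x + y) (ha : orient x y a = 0) : (a = x ∧ b = y) ∨ (a = y ∧ b = x) := by
  obtain ⟨n, rfl⟩ := exists_eq_add_smul_of_orient_eq_zero h ha
  obtain rfl : b = y - n • (y - x) := by
    rw [add_assoc, add_right_inj] at hab
    exact eq_sub_of_add_eq' hab
  have hunit : (1 - 2 * n) * orient x y c = 1 := by
    refine Eq.trans ?_ h'
    simp only [orient, Prod.fst_sub, Prod.snd_sub, Prod.fst_add, Prod.snd_add, Prod.smul_fst,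
      Prod.smul_snd, smul_eq_mul]
    ring
  obtain rfl | rfl : n = 0 ∨ n = 1 := by
    rcases Int.eq_one_or_neg_one_of_mul_eq_one hunit with hn | hn <;> omega
  · simp
  · simp

end Midpoint

/-- A primitive triangulation of `V` up to boundaries: lattice triangles with vertices in `V`, such
that every generic point of the convex hull of `V` lies in exactly one of them. -/
structure IsGenericTriangulation (V : Set (ℤ × ℤ)) (T : Finset (Finset (ℤ × ℤ))) : Prop where
  isPrimTriangle : ∀ t ∈ T, IsPrimTriangle t
  subset : ∀ t ∈ T, (t : Set (ℤ × ℤ)) ⊆ V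
  exists_mem : ∀ p, IsGeneric p → p ∈ latticeHull V → ∃ t ∈ T, p ∈ latticeHull t
  eq_of_mem : ∀ p, IsGeneric p → ∀ t ∈ T, ∀ t' ∈ T, p ∈ latticeHull t → p ∈ latticeHull t' → t = t'

lemma IsPrimTriangle.eq_of_mem_latticeHull_inter {t t' : Finset (ℤ × ℤ)} (ht : IsPrimTriangle t)
    (ht' : IsPrimTriangle t') {p : ℝ × ℝ} (hp : IsGeneric p)
    (hmem : p ∈ latticeHull (t ∩ t' : Finset (ℤ × ℤ))) : t = t' := by
  by_contra hne
  obtain ⟨c, hc, hc'⟩ : ∃ c ∈ t, c ∉ t' := Finset.not_subset.mp fun hsub =>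
    hne (Finset.eq_of_subset_of_card_le hsub (ht'.card_eq_three.trans ht.card_eq_three.symm).le)
  obtain ⟨a, b, rfl, h⟩ := ht.exists_orient_eq_one_of_mem hc
  have hinter : ∀ q ∈ (({a, b, c} ∩ t' : Finset (ℤ × ℤ)) : Set (ℤ × ℤ)), orient a b q = 0 := by
    intro q hq
    obtain ⟨hq, hq'⟩ := Finset.mem_inter.mp (Finset.mem_coe.mp hq)
    simp only [Finset.mem_insert, Finset.mem_singleton] at hq
    obtain rfl | rfl | rfl := hq
    exacts [orient_self_left .., orient_self_right .., absurd hq' hc']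
  refine hp.orient_ne_zero (ne_of_orient_ne_zero (h.trans_ne one_ne_zero)).1 (le_antisymm ?_ ?_)
  · rw [← neg_nonneg, ← orient_swap]
    exact orient_nonneg_of_mem_latticeHull (fun q hq => by rw [orient_swap, hinter q hq]; simp) hmem
  · exact orient_nonneg_of_mem_latticeHull (fun q hq => (hinter q hq).ge) hmem

lemma IsPrimTriangulation.isGenericTriangulation {d : ℕ} {T : Finset (Finset (ℤ × ℤ))}
    (hT : IsPrimTriangulation d T) : IsGenericTriangulation (TdPts d) T where
  isPrimTriangle t ht := (hT.1 t ht).1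
  subset t ht := (hT.1 t ht).2
  exists_mem p _ hp := by
    simpa only [latticeHull, Set.mem_iUnion₂, exists_prop] using hT.2.1.ge hp
  eq_of_mem _ hp t ht t' ht' hpt hpt' := (hT.1 t ht).1.eq_of_mem_latticeHull_inter (hT.1 t' ht').1
    hp ((hT.2.2 t ht t' ht').le ⟨hpt, hpt'⟩)

namespace IsGenericTriangulation

variable {V P : Set (ℤ × ℤ)} {T S S' : Finset (Finset (ℤ × ℤ))}

lemma exchange (hT : IsGenericTriangulation V T) (hP : P ⊆ V) (hS : IsGenericTriangulation P S)
    (hS' : IsGenericTriangulation P S') (hST : S ⊆ T) :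
    IsGenericTriangulation V (T \ S ∪ S') := by
  have not_mem_hull {p : ℝ × ℝ} (hp : IsGeneric p) {t : Finset (ℤ × ℤ)} (ht : t ∈ T \ S)
      (hpt : p ∈ latticeHull t) : p ∉ latticeHull P := by
    intro hpP
    obtain ⟨ht, htS⟩ := Finset.mem_sdiff.mp ht
    obtain ⟨s, hs, hps⟩ := hS.exists_mem p hp hpP
    exact htS (hT.eq_of_mem p hp s (hST hs) t ht hps hpt ▸ hs)
  have hull_subset {t : Finset (ℤ × ℤ)} (ht : t ∈ S') : latticeHull t ⊆ latticeHull P :=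
    latticeHull_mono (hS'.subset t ht)
  refine ⟨fun t ht => ?_, fun t ht => ?_, fun p hp hpV => ?_, fun p hp t ht t' ht' hpt hpt' => ?_⟩
  · rcases Finset.mem_union.mp ht with ht | ht
    exacts [hT.isPrimTriangle t (Finset.mem_sdiff.mp ht).1, hS'.isPrimTriangle t ht]
  · rcases Finset.mem_union.mp ht with ht | ht
    exacts [hT.subset t (Finset.mem_sdiff.mp ht).1, (hS'.subset t ht).trans hP]
  · obtain ⟨t, ht, hpt⟩ := hT.exists_mem p hp hpV
    by_cases htS : t ∈ S
    · obtain ⟨s, hs, hps⟩ := hS'.exists_mem p hp (latticeHull_mono (hS.subset t htS) hpt)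
      exact ⟨s, Finset.mem_union_right _ hs, hps⟩
    · exact ⟨t, Finset.mem_union_left _ (Finset.mem_sdiff.mpr ⟨ht, htS⟩), hpt⟩
  · rcases Finset.mem_union.mp ht with ht | ht <;> rcases Finset.mem_union.mp ht' with ht' | ht'
    · exact hT.eq_of_mem p hp t (Finset.mem_sdiff.mp ht).1 t' (Finset.mem_sdiff.mp ht').1 hpt hpt'
    · exact absurd (hull_subset ht' hpt') (not_mem_hull hp ht hpt)
    · exact absurd (hull_subset ht hpt) (not_mem_hull hp ht' hpt')
    · exact hS'.eq_of_mem p hp t ht t' ht' hpt hpt'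

lemma disjoint_of_disjoint (hT : IsGenericTriangulation V T) (hS : IsGenericTriangulation P S)
    (hS' : IsGenericTriangulation P S') (hST : S ⊆ T) (hdisj : Disjoint S S') :
    Disjoint T S' := by
  rw [Finset.disjoint_left] at hdisj ⊢
  intro t ht htS'
  obtain ⟨p, hp, hpt⟩ := (hS'.isPrimTriangle t htS').exists_isGeneric_mem
  obtain ⟨s, hs, hps⟩ := hS.exists_mem p hp (latticeHull_mono (hS'.subset t htS') hpt)
  exact hdisj (hT.eq_of_mem p hp s (hST hs) t ht hps hpt ▸ hs) htS'

end IsGenericTriangulation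

/-- The points `x`, `z`, `y`, `w` are the vertices, in clockwise order, of a parallelogram of
area `1` with diagonals `xy` and `zw`. -/
structure IsUnitParallelogram (x y z w : ℤ × ℤ) : Prop where
  add_eq : z + w = x + y
  orient_eq : orient x y z = 1

/-- The two triangles into which the diagonal `xy` cuts the parallelogram `xzyw`. -/
def halves (x y z w : ℤ × ℤ) : Finset (Finset (ℤ × ℤ)) := {{x, y, z}, {y, x, w}}

namespace IsUnitParallelogram

variable {x y z w : ℤ × ℤ}

lemma orient_eq_opposite (h : IsUnitParallelogram x y z w) : orient y x w = 1 := by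
  obtain rfl : w = x + y - z := eq_sub_of_add_eq' h.add_eq
  refine Eq.trans ?_ h.orient_eq
  simp only [orient, Prod.fst_sub, Prod.snd_sub, Prod.fst_add, Prod.snd_add]
  ring

lemma rotate (h : IsUnitParallelogram x y z w) : IsUnitParallelogram w z x y where
  add_eq := by rw [← h.add_eq, add_comm]
  orient_eq := by
    obtain rfl : w = x + y - z := eq_sub_of_add_eq' h.add_eq
    refine Eq.trans ?_ h.orient_eq
    simp only [orient, Prod.fst_sub, Prod.snd_sub, Prod.fst_add, Prod.snd_add]
    ring

lemma orient_side_nonneg (h : IsUnitParallelogram x y z w) {p : ℝ × ℝ}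
    (hp : p ∈ latticeHull {x, y, z, w}) : 0 ≤ orient (toRp z) (toRp x) p := by
  refine orient_nonneg_of_mem_latticeHull ?_ hp
  have hy : orient z x y = 1 := by rw [← orient_rotate, h.orient_eq]
  have hw : orient z x w = 1 := by rw [orient_rotate, h.rotate.orient_eq]
  rintro _ (rfl | rfl | rfl | rfl) <;> simp [hy, hw]

lemma isGenericTriangulation_halves (h : IsUnitParallelogram x y z w) :
    IsGenericTriangulation {x, y, z, w} (halves x y z w) := by
  have swap (p : ℝ × ℝ) : orient (toRp y) (toRp x) p = -orient (toRp x) (toRp y) p :=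
    orient_swap ..
  refine ⟨?_, ?_, fun p _ hmem => ?_, fun p hp => ?_⟩
  · simpa [halves] using ⟨isPrimTriangle_of_orient_eq_one h.orient_eq,
      isPrimTriangle_of_orient_eq_one h.orient_eq_opposite⟩
  · simp [halves, Set.insert_subset_iff]
  · have hzx := h.orient_side_nonneg hmem
    have hxw := h.rotate.orient_side_nonneg (p := p) (by convert hmem using 2; grind)
    have hwy := h.rotate.rotate.orient_side_nonneg (p := p) (by convert hmem using 2; grind)
    have hyz := h.rotate.rotate.rotate.orient_side_nonneg (p := p) (by convert hmem using 2; grind)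
    simp only [halves, Finset.mem_insert, Finset.mem_singleton, exists_eq_or_imp, exists_eq_left,
      mem_latticeHull_triple_iff h.orient_eq, mem_latticeHull_triple_iff h.orient_eq_opposite]
    rcases le_total 0 (orient (toRp x) (toRp y) p) with hpos | hneg
    · exact Or.inl ⟨hpos, hyz, hzx⟩
    · exact Or.inr ⟨by rw [swap]; linarith, hxw, hwy⟩
  · have not_both (h₁ : p ∈ latticeHull ({x, y, z} : Finset (ℤ × ℤ)))
        (h₂ : p ∈ latticeHull ({y, x, w} : Finset (ℤ × ℤ))) : False := by
      rw [hp.mem_latticeHull_triple_iff_pos h.orient_eq] at h₁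
      rw [hp.mem_latticeHull_triple_iff_pos h.orient_eq_opposite, swap] at h₂
      linarith [h₁.1, h₂.1]
    simp only [halves, Finset.mem_insert, Finset.mem_singleton, forall_eq_or_imp, forall_eq]
    exact ⟨⟨fun _ _ => trivial, fun h₁ h₂ => (not_both h₁ h₂).elim⟩,
      fun h₂ h₁ => (not_both h₁ h₂).elim, fun _ _ => trivial⟩

lemma disjoint_halves (h : IsUnitParallelogram x y z w) :
    Disjoint (halves x y z w) (halves w z x y) := by
  obtain ⟨-, hyz, hzx⟩ := ne_of_orient_ne_zero (h.orient_eq.trans_ne one_ne_zero)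
  obtain ⟨-, hxw, hwy⟩ := ne_of_orient_ne_zero (h.orient_eq_opposite.trans_ne one_ne_zero)
  obtain ⟨hwz, -, -⟩ := ne_of_orient_ne_zero (h.rotate.orient_eq.trans_ne one_ne_zero)
  have not_both : ∀ t ∈ halves x y z w, ¬ (z ∈ t ∧ w ∈ t) := by
    simp [halves, hyz.symm, hzx, hxw.symm, hwy, hwz, hwz.symm]
  have both : ∀ t ∈ halves w z x y, z ∈ t ∧ w ∈ t := by simp [halves]
  exact Finset.disjoint_left.mpr fun t ht ht' => not_both t ht (both t ht')

lemma isFlip {T : Finset (Finset (ℤ × ℤ))} (h : IsUnitParallelogram x y z w)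
    (hT : halves x y z w ⊆ T) : IsFlip T (T \ halves x y z w ∪ halves w z x y) := by
  have hwz := (ne_of_orient_ne_zero (h.rotate.orient_eq.trans_ne one_ne_zero)).1
  have hyxw : ({y, x, w} : Finset (ℤ × ℤ)) = {x, y, w} := Finset.insert_comm ..
  have hwzx : ({w, z, x} : Finset (ℤ × ℤ)) = {x, z, w} := by grind
  have hzwy : ({z, w, y} : Finset (ℤ × ℤ)) = {y, z, w} := triple_rotate ..
  simp only [halves, hyxw, hwzx, hzwy, Finset.insert_subset_iff,
    Finset.singleton_subset_iff] at hT ⊢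
  exact ⟨x, y, z, w, hT.1, hT.2, hwz.symm, h.add_eq, rfl⟩

lemma isFlip_reverse {T : Finset (Finset (ℤ × ℤ))} (h : IsUnitParallelogram x y z w)
    (hT : halves x y z w ⊆ T) (hdisj : Disjoint T (halves w z x y)) :
    IsFlip (T \ halves x y z w ∪ halves w z x y) T := by
  have hhalves : halves y x w z = halves x y z w := Finset.pair_comm ..
  have hback : (T \ halves x y z w ∪ halves w z x y) \ halves w z x y ∪ halves y x w z = T := by
    rw [hhalves, Finset.union_sdiff_right,
      (hdisj.mono_left Finset.sdiff_subset).sdiff_eq_left, Finset.sdiff_union_of_subset hT]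
  simpa only [hback] using h.rotate.isFlip (T := T \ halves x y z w ∪ halves w z x y)
    Finset.subset_union_right

end IsUnitParallelogram

/-- The squared Euclidean length of `v` after the linear map that makes `(1, 0)`, `(0, 1)` and
`(1, -1)` unit vectors, i.e. that turns `ℤ × ℤ` into a hexagonal lattice. -/
def hexSq (v : ℤ × ℤ) : ℤ := v.1 ^ 2 + v.1 * v.2 + v.2 ^ 2

lemma hexSq_nonneg (v : ℤ × ℤ) : 0 ≤ hexSq v := by
  unfold hexSq; nlinarith [sq_nonneg (v.1 + v.2), sq_nonneg v.1, sq_nonneg v.2]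

lemma hexSq_sub_comm (v w : ℤ × ℤ) : hexSq (v - w) = hexSq (w - v) := by
  simp only [hexSq, Prod.fst_sub, Prod.snd_sub]; ring

lemma hexSq_sub_self (v : ℤ × ℤ) : hexSq (v - v) = 0 := by simp [hexSq]

lemma abs_le_one_of_hexSq_le_one {v : ℤ × ℤ} (hv : hexSq v ≤ 1) :
    |v.1| ≤ 1 ∧ |v.2| ≤ 1 ∧ |v.1 + v.2| ≤ 1 := by
  unfold hexSq at hv
  refine ⟨?_, ?_, ?_⟩ <;> rw [← sq_le_one_iff_abs_le_one]
  · nlinarith [sq_nonneg (v.1 + 2 * v.2)]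
  · nlinarith [sq_nonneg (2 * v.1 + v.2)]
  · nlinarith [sq_nonneg (v.1 - v.2)]

lemma hexSq_parallelogram {x y z w : ℤ × ℤ} (h : z + w = x + y) :
    hexSq (y - x) + hexSq (w - z) = 2 * (hexSq (z - x) + hexSq (z - y)) := by
  obtain rfl : w = x + y - z := eq_sub_of_add_eq' h
  simp only [hexSq, Prod.fst_sub, Prod.snd_sub, Prod.fst_add, Prod.snd_add]
  ring

/-- Heron's formula: the area form has discriminant `3` with respect to `hexSq`. -/
lemma heron_hexSq (x y z : ℤ × ℤ) :
    4 * hexSq (z - x) * hexSq (z - y) - (hexSq (z - x) + hexSq (z - y) - hexSq (y - x)) ^ 2 =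
      3 * orient x y z ^ 2 := by
  simp only [hexSq, orient, Prod.fst_sub, Prod.snd_sub]
  ring

/-- The angle at `z`, opposite to a longest edge `xy` that is not of unit length, is obtuse. -/
lemma hexSq_add_hexSq_lt {x y z : ℤ × ℤ} (h : orient x y z = 1) (hlong : 1 < hexSq (y - x))
    (hzx : hexSq (z - x) ≤ hexSq (y - x)) (hzy : hexSq (z - y) ≤ hexSq (y - x)) :
    hexSq (z - x) + hexSq (z - y) < hexSq (y - x) := by
  have heron := heron_hexSq x y z
  rw [h] at heron
  have hu := hexSq_nonneg (z - x)
  have hv := hexSq_nonneg (z - y)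
  generalize hexSq (z - x) = u at *
  generalize hexSq (z - y) = v at *
  generalize hexSq (y - x) = w at *
  by_contra! hacute
  have hsq : (u + v - w) * (u + v - w) ≤ u * v :=
    mul_le_mul (by linarith) (by linarith) (by linarith) hu
  have huv : u * v = 1 := by
    have : 0 ≤ (u + v - w) * (u + v - w) := mul_self_nonneg _
    lia
  obtain rfl : u = 1 := Int.eq_one_of_mul_eq_one_right hu huv
  obtain rfl : v = 1 := by lia
  have hw : w = 2 := by lia
  subst hw
  norm_num at heron

lemma isUnitParallelogram_of_hexSq_add_hexSq_lt {x y z w : ℤ × ℤ} (hz : orient x y z = 1)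
    (hw : orient y x w = 1) (hz_obtuse : hexSq (z - x) + hexSq (z - y) < hexSq (y - x))
    (hw_obtuse : hexSq (w - x) + hexSq (w - y) < hexSq (y - x)) :
    IsUnitParallelogram x y z w := by
  have hparallel : orient x y (z + w - x) = 0 := by
    rw [orient_swap] at hw
    simp only [orient, Prod.fst_sub, Prod.snd_sub, Prod.fst_add, Prod.snd_add] at hz hw ⊢
    linear_combination hz - hw
  obtain ⟨n, hn⟩ := exists_eq_add_smul_of_orient_eq_zero hz hparallel
  have hprojection : hexSq (z - x) - hexSq (z - y) + (hexSq (w - x) - hexSq (w - y)) =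
      2 * (n - 1) * hexSq (y - x) := by
    obtain rfl : w = x + n • (y - x) + x - z := by rw [← hn]; abel
    simp only [hexSq, Prod.fst_sub, Prod.snd_sub, Prod.fst_add, Prod.snd_add, Prod.smul_fst,
      Prod.smul_snd, smul_eq_mul]
    ring
  obtain rfl : n = 1 := by
    have hzx := hexSq_nonneg (z - x)
    have hzy := hexSq_nonneg (z - y)
    have hwx := hexSq_nonneg (w - x)
    have hwy := hexSq_nonneg (w - y)
    have h₁ : n - 1 < 1 := by nlinarith
    have h₂ : -1 < n - 1 := by nlinarith
    lia
  refine ⟨?_, hz⟩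
  rw [one_smul, add_sub_cancel, sub_eq_iff_eq_add] at hn
  rw [hn, add_comm]

/-- The total squared length, in the hexagonal metric, of the sides of the triangles in `T`, each
side being counted in both directions. -/
def energy (T : Finset (Finset (ℤ × ℤ))) : ℤ := ∑ t ∈ T, ∑ a ∈ t, ∑ b ∈ t, hexSq (b - a)

lemma energy_nonneg (T : Finset (Finset (ℤ × ℤ))) : 0 ≤ energy T :=
  Finset.sum_nonneg fun _ _ => Finset.sum_nonneg fun _ _ => Finset.sum_nonneg fun _ _ =>
    hexSq_nonneg _

lemma energy_sdiff_union {T S S' : Finset (Finset (ℤ × ℤ))} (hST : S ⊆ T) (hdisj : Disjoint T S') :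
    energy (T \ S ∪ S') + energy S = energy T + energy S' := by
  unfold energy
  rw [Finset.sum_union (hdisj.mono_left Finset.sdiff_subset), ← Finset.sum_sdiff hST]
  ring

lemma sum_hexSq_triple {a b c : ℤ × ℤ} (h : orient a b c = 1) :
    ∑ p ∈ {a, b, c}, ∑ q ∈ {a, b, c}, hexSq (q - p) =
      2 * (hexSq (b - a) + hexSq (c - a) + hexSq (c - b)) := by
  obtain ⟨hab, hbc, hca⟩ := ne_of_orient_ne_zero (h.trans_ne one_ne_zero)
  have ha : a ∉ ({b, c} : Finset (ℤ × ℤ)) := by simp [hab, hca.symm]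
  have hb : b ∉ ({c} : Finset (ℤ × ℤ)) := by simpa using hbc
  simp only [Finset.sum_insert ha, Finset.sum_insert hb, Finset.sum_singleton, hexSq_sub_self]
  rw [hexSq_sub_comm a b, hexSq_sub_comm a c, hexSq_sub_comm b c]
  ring

lemma IsUnitParallelogram.energy_halves {x y z w : ℤ × ℤ} (h : IsUnitParallelogram x y z w) :
    energy (halves x y z w) = 4 * (hexSq (y - x) + hexSq (z - x) + hexSq (z - y)) := by
  obtain ⟨-, hyz, hzx⟩ := ne_of_orient_ne_zero (h.orient_eq.trans_ne one_ne_zero)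
  obtain ⟨hwz, -, -⟩ := ne_of_orient_ne_zero (h.rotate.orient_eq.trans_ne one_ne_zero)
  have hne : ({x, y, z} : Finset (ℤ × ℤ)) ≠ {y, x, w} := fun heq => by
    have : z ∈ ({y, x, w} : Finset (ℤ × ℤ)) := heq ▸ by simp
    simp [hyz.symm, hzx, hwz.symm] at this
  have hwx : w - x = y - z := by rw [sub_eq_sub_iff_add_eq_add, add_comm w, h.add_eq, add_comm]
  have hwy : w - y = x - z := by rw [sub_eq_sub_iff_add_eq_add, add_comm w, h.add_eq]
  rw [energy, halves, Finset.sum_pair hne, sum_hexSq_triple h.orient_eq,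
    sum_hexSq_triple h.orient_eq_opposite, hwx, hwy, hexSq_sub_comm x y, hexSq_sub_comm x z,
    hexSq_sub_comm y z]
  ring

lemma IsUnitParallelogram.energy_halves_lt {x y z w : ℤ × ℤ} (h : IsUnitParallelogram x y z w)
    (hobtuse : hexSq (z - x) + hexSq (z - y) < hexSq (y - x)) :
    energy (halves w z x y) < energy (halves x y z w) := by
  have hxw : x - w = z - y := by rw [sub_eq_sub_iff_add_eq_add, h.add_eq]
  rw [h.energy_halves, h.rotate.energy_halves, hxw, hexSq_sub_comm z w, hexSq_sub_comm x z]
  linarith [hexSq_parallelogram h.add_eq]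

section Energy

variable {V : Set (ℤ × ℤ)} {T : Finset (Finset (ℤ × ℤ))} {x y z : ℤ × ℤ}

lemma IsGenericTriangulation.exists_isFlip (hT : IsGenericTriangulation V T) {w : ℤ × ℤ}
    (h : IsUnitParallelogram x y z w) (hhalves : halves x y z w ⊆ T)
    (hobtuse : hexSq (z - x) + hexSq (z - y) < hexSq (y - x)) :
    ∃ T', IsGenericTriangulation V T' ∧ IsFlip T T' ∧ IsFlip T' T ∧ energy T' < energy T := by
  have hP : ({x, y, z, w} : Set (ℤ × ℤ)) ⊆ V := by
    have hz := hT.subset _ (hhalves (Finset.mem_insert_self {x, y, z} _))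
    have hw := hT.subset {y, x, w} (hhalves (by simp [halves]))
    grind
  have hS := h.isGenericTriangulation_halves
  have hS' : IsGenericTriangulation {x, y, z, w} (halves w z x y) := by
    convert h.rotate.isGenericTriangulation_halves using 1
    grind
  have hdisj := hT.disjoint_of_disjoint hS hS' hhalves h.disjoint_halves
  refine ⟨T \ halves x y z w ∪ halves w z x y, hT.exchange hP hS hS' hhalves, h.isFlip hhalves,
    h.isFlip_reverse hhalves hdisj, ?_⟩
  linarith [energy_sdiff_union hhalves hdisj, h.energy_halves_lt hobtuse]

lemma IsGenericTriangulation.exists_mem_below (hT : IsGenericTriangulation V T) (hxy : x ≠ y)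
    (hm : midpoint ℝ (toRp x) (toRp y) ∈ interior (latticeHull V)) :
    ∃ t ∈ T, midpoint ℝ (toRp x) (toRp y) ∈ latticeHull t ∧
      ∃ p ∈ latticeHull t, 0 < orient (toRp y) (toRp x) p := by
  set m := midpoint ℝ (toRp x) (toRp y)
  set H := {p | 0 < orient (toRp y) (toRp x) p}
  have hH : IsOpen H := isOpen_setOf_orient_pos _ _
  have hmH : m ∈ closure H := mem_closure_setOf_orient_pos (toRp_injective.ne hxy.symm)
    (by simp [m, orient_midpoint])
  have hcover : (interior (latticeHull V) ∩ H) ∩ {p | IsGeneric p} ⊆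
      ⋃ t ∈ T, latticeHull t ∩ H := by
    rintro p ⟨⟨hpV, hpH⟩, hp⟩
    obtain ⟨t, ht, hpt⟩ := hT.exists_mem p hp (interior_subset hpV)
    exact Set.mem_biUnion ht ⟨hpt, hpH⟩
  have hclosure : m ∈ closure (⋃ t ∈ T, latticeHull t ∩ H) :=
    closure_mono hcover <| mem_closure_inter_isGeneric (isOpen_interior.inter hH) <|
      isOpen_interior.inter_closure ⟨hm, hmH⟩
  rw [Finset.closure_biUnion, Set.mem_iUnion₂] at hclosure
  obtain ⟨t, ht, hmt⟩ := hclosure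
  obtain ⟨p, hp, hpH⟩ := closure_nonempty_iff.mp ⟨m, hmt⟩
  have hmem : m ∈ latticeHull t :=
    (isClosed_latticeHull t).closure_subset_iff.mpr Set.inter_subset_left hmt
  exact ⟨t, ht, hmem, p, hp, hpH⟩

lemma IsGenericTriangulation.exists_neighbor (hT : IsGenericTriangulation V T)
    (ht : {x, y, z} ∈ T) (h : orient x y z = 1)
    (hm : midpoint ℝ (toRp x) (toRp y) ∈ interior (latticeHull V)) :
    ∃ w, {y, x, w} ∈ T ∧ orient y x w = 1 := by
  have hxy := (ne_of_orient_ne_zero (h.trans_ne one_ne_zero)).1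
  obtain ⟨t, htT, hmt, p, hpt, hp⟩ := hT.exists_mem_below hxy hm
  have not_above {c : ℤ × ℤ} (hc : orient x y c = 1) : t ≠ {x, y, c} := by
    rintro rfl
    rw [mem_latticeHull_triple_iff hc, orient_swap] at hpt
    linarith [hpt.1]
  obtain ⟨a, b, c, rfl, habc, hab⟩ := exists_edge_of_midpoint_mem h (hT.isPrimTriangle t htT) hmt
  by_cases ha : orient x y a = 0
  · obtain ⟨rfl, rfl⟩ | ⟨rfl, rfl⟩ := eq_or_eq_of_add_eq_of_orient_eq_zero h habc hab ha
    · exact (not_above habc rfl).elim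
    · exact ⟨c, htT, habc⟩
  · obtain ⟨q, hq, hqz, hqc⟩ := exists_isGeneric_mem_inter_of_add_eq h habc hab ha
    exact (not_above h (hT.eq_of_mem q hq _ htT _ ht hqc hqz)).elim

end Energy

/-- Every edge of every triangle in `T` is a unit vector of the hexagonal metric. -/
def HexReduced (T : Finset (Finset (ℤ × ℤ))) : Prop :=
  ∀ t ∈ T, ∀ a ∈ t, ∀ b ∈ t, hexSq (b - a) ≤ 1

/-- Primitive segments between points of `V` that are not of unit length in the hexagonal metric
have their midpoint in the interior of the convex hull of `V`. -/
def HasShortBoundary (V : Set (ℤ × ℤ)) : Prop :=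
  ∀ x ∈ V, ∀ y ∈ V, ∀ z, orient x y z = 1 → 1 < hexSq (y - x) →
    midpoint ℝ (toRp x) (toRp y) ∈ interior (latticeHull V)

lemma IsPrimTriangle.exists_orient_eq_one_of_ne {t : Finset (ℤ × ℤ)} (ht : IsPrimTriangle t)
    {x y : ℤ × ℤ} (hx : x ∈ t) (hy : y ∈ t) (hxy : x ≠ y) :
    ∃ a b c, t = {a, b, c} ∧ orient a b c = 1 ∧ (a = x ∧ b = y ∨ a = y ∧ b = x) := by
  obtain ⟨z, hz, hzxy⟩ : ∃ z ∈ t, z ∉ ({x, y} : Finset (ℤ × ℤ)) :=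
    Finset.exists_mem_notMem_of_card_lt_card (by rw [ht.card_eq_three, Finset.card_pair hxy]; simp)
  obtain ⟨a, b, rfl, h⟩ := ht.exists_orient_eq_one_of_mem hz
  refine ⟨a, b, z, rfl, h, ?_⟩
  simp only [Finset.mem_insert, Finset.mem_singleton] at hx hy hzxy
  grind

section Descent

variable {V : Set (ℤ × ℤ)} {T : Finset (Finset (ℤ × ℤ))}

lemma exists_longest_edge (hprim : ∀ t ∈ T, IsPrimTriangle t) (hT : ¬ HexReduced T) :
    ∃ x y z, {x, y, z} ∈ T ∧ orient x y z = 1 ∧ 1 < hexSq (y - x) ∧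
      ∀ t ∈ T, ∀ a ∈ t, ∀ b ∈ t, hexSq (b - a) ≤ hexSq (y - x) := by
  simp only [HexReduced, not_forall, not_le] at hT
  obtain ⟨t₀, ht₀, a₀, ha₀, b₀, hb₀, hlong⟩ := hT
  obtain ⟨⟨x, y⟩, hmem, hmax⟩ := (T.biUnion fun t => t ×ˢ t).exists_max_image
    (fun e => hexSq (e.2 - e.1))
    ⟨(a₀, b₀), Finset.mem_biUnion.mpr ⟨t₀, ht₀, Finset.mk_mem_product ha₀ hb₀⟩⟩
  replace hmax : ∀ t ∈ T, ∀ a ∈ t, ∀ b ∈ t, hexSq (b - a) ≤ hexSq (y - x) := fun t ht a ha b hb =>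
    hmax (a, b) (Finset.mem_biUnion.mpr ⟨t, ht, Finset.mk_mem_product ha hb⟩)
  have hlong' : 1 < hexSq (y - x) := hlong.trans_le (hmax t₀ ht₀ a₀ ha₀ b₀ hb₀)
  obtain ⟨t, ht, hxy⟩ := Finset.mem_biUnion.mp hmem
  obtain ⟨hx, hy⟩ := Finset.mem_product.mp hxy
  have hne : x ≠ y := by
    rintro rfl
    rw [hexSq_sub_self] at hlong'
    exact absurd hlong' (by norm_num)
  obtain ⟨a, b, c, rfl, h, ⟨rfl, rfl⟩ | ⟨rfl, rfl⟩⟩ :=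
    (hprim t ht).exists_orient_eq_one_of_ne hx hy hne
  · exact ⟨a, b, c, ht, h, hlong', hmax⟩
  · rw [hexSq_sub_comm] at hlong' hmax
    exact ⟨a, b, c, ht, h, hlong', hmax⟩

/-- Flip a longest edge. -/
lemma IsGenericTriangulation.exists_isFlip_of_not_hexReduced (hV : HasShortBoundary V)
    (hT : IsGenericTriangulation V T) (hred : ¬ HexReduced T) :
    ∃ T', IsGenericTriangulation V T' ∧ IsFlip T T' ∧ IsFlip T' T ∧ energy T' < energy T := by
  obtain ⟨x, y, z, hz, h, hlong, hmax⟩ := exists_longest_edge hT.isPrimTriangle hred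
  have hxV : x ∈ V := hT.subset _ hz (by simp)
  have hyV : y ∈ V := hT.subset _ hz (by simp)
  obtain ⟨w, hw, h'⟩ := hT.exists_neighbor hz h (hV x hxV y hyV z h hlong)
  have hz_obtuse := hexSq_add_hexSq_lt h hlong
    (hmax _ hz x (by simp) z (by simp)) (hmax _ hz y (by simp) z (by simp))
  have hw_obtuse : hexSq (w - x) + hexSq (w - y) < hexSq (y - x) := by
    rw [hexSq_sub_comm y x, add_comm]
    rw [hexSq_sub_comm y x] at hlong hmax
    exact hexSq_add_hexSq_lt h' hlong
      (hmax _ hw y (by simp) w (by simp)) (hmax _ hw x (by simp) w (by simp))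
  refine hT.exists_isFlip (isUnitParallelogram_of_hexSq_add_hexSq_lt h h' hz_obtuse hw_obtuse) ?_
    hz_obtuse
  simp [halves, Finset.insert_subset_iff, hz, hw]

lemma IsGenericTriangulation.exists_hexReduced (hV : HasShortBoundary V)
    (hT : IsGenericTriangulation V T) :
    ∃ S, IsGenericTriangulation V S ∧ HexReduced S ∧
      Relation.ReflTransGen IsFlip T S ∧ Relation.ReflTransGen IsFlip S T := by
  induction hn : (energy T).toNat using Nat.strong_induction_on generalizing T with
  | _ n ih =>
    by_cases hred : HexReduced T
    · exact ⟨T, hT, hred, .refl, .refl⟩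
    · obtain ⟨T', hT', hflip, hflip', hlt⟩ := hT.exists_isFlip_of_not_hexReduced hV hred
      obtain ⟨S, hS, hSred, hTS, hST⟩ := ih (energy T').toNat
        (by have := energy_nonneg T'; lia) hT' rfl
      exact ⟨S, hS, hSred, .head hflip hTS, hST.tail hflip'⟩

end Descent

section Alcove

variable {V : Set (ℤ × ℤ)} {p : ℝ × ℝ} {t : Finset (ℤ × ℤ)}

/-- The vertices of the triangle containing the generic point `p` in the standard triangulation of
the plane, which is cut out by the lines on which `x`, `y` or `x + y` is an integer. -/
def alcove (p : ℝ × ℝ) : Finset (ℤ × ℤ) :=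
  {v ∈ Finset.Icc ⌊p.1⌋ (⌊p.1⌋ + 1) ×ˢ Finset.Icc ⌊p.2⌋ (⌊p.2⌋ + 1) |
    v.1 + v.2 ∈ Finset.Icc ⌊p.1 + p.2⌋ (⌊p.1 + p.2⌋ + 1)}

lemma card_alcove_le_three (p : ℝ × ℝ) : (alcove p).card ≤ 3 := by
  obtain ⟨v, hsub⟩ : ∃ v : ℤ × ℤ, alcove p ⊆ {(⌊p.1⌋ + 1, ⌊p.2⌋), (⌊p.1⌋, ⌊p.2⌋ + 1), v} := by
    rcases (Int.le_floor_add p.1 p.2).eq_or_lt with hsum | hsum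
    · refine ⟨(⌊p.1⌋, ⌊p.2⌋), fun q hq => ?_⟩
      simp only [alcove, Finset.mem_filter, Finset.mem_product, Finset.mem_Icc, Finset.mem_insert,
        Finset.mem_singleton, Prod.ext_iff] at hq ⊢
      lia
    · refine ⟨(⌊p.1⌋ + 1, ⌊p.2⌋ + 1), fun q hq => ?_⟩
      simp only [alcove, Finset.mem_filter, Finset.mem_product, Finset.mem_Icc, Finset.mem_insert,
        Finset.mem_singleton, Prod.ext_iff] at hq ⊢
      lia
  exact (Finset.card_le_card hsub).trans Finset.card_le_three

lemma mem_Icc_floor_of_mem_latticeHull (hp : IsGeneric p) (hpt : p ∈ latticeHull t) {u v k : ℤ}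
    (huv : ¬ (u = 0 ∧ v = 0)) (hk : ∀ b ∈ t, |u * b.1 + v * b.2 - k| ≤ 1) :
    k ∈ Finset.Icc ⌊u * p.1 + v * p.2⌋ (⌊u * p.1 + v * p.2⌋ + 1) := by
  have hconvex : Convex ℝ {q : ℝ × ℝ | u * q.1 + v * q.2 ∈ Set.Icc (k - 1 : ℝ) (k + 1)} :=
    (convex_Icc _ _).linear_preimage
      ((u : ℝ) • LinearMap.fst ℝ ℝ ℝ + (v : ℝ) • LinearMap.snd ℝ ℝ ℝ)
  have hmem : u * p.1 + v * p.2 ∈ Set.Icc (k - 1 : ℝ) (k + 1) := by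
    refine convexHull_min ?_ hconvex hpt
    rintro _ ⟨b, hb, rfl⟩
    have := abs_le.mp (hk b hb)
    simp only [toRp, Set.mem_ofPred_eq, Set.mem_Icc]
    norm_cast
    lia
  have hne : u * p.1 + v * p.2 ≠ k + 1 := fun h => huv (hp u v (k + 1) (by exact_mod_cast h))
  rw [Finset.mem_Icc, ← Int.lt_add_one_iff, Int.floor_lt, ← sub_le_iff_le_add, Int.le_floor]
  exact ⟨by exact_mod_cast hmem.2.lt_of_ne hne, by exact_mod_cast hmem.1⟩

lemma subset_alcove (hp : IsGeneric p) (hpt : p ∈ latticeHull t)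
    (ht : ∀ a ∈ t, ∀ b ∈ t, hexSq (b - a) ≤ 1) : t ⊆ alcove p := by
  intro a ha
  have h₁ := mem_Icc_floor_of_mem_latticeHull hp hpt (u := 1) (v := 0) (k := a.1) (by simp)
    fun b hb => by simpa using (abs_le_one_of_hexSq_le_one (ht a ha b hb)).1
  have h₂ := mem_Icc_floor_of_mem_latticeHull hp hpt (u := 0) (v := 1) (k := a.2) (by simp)
    fun b hb => by simpa using (abs_le_one_of_hexSq_le_one (ht a ha b hb)).2.1
  have h₃ := mem_Icc_floor_of_mem_latticeHull hp hpt (u := 1) (v := 1) (k := a.1 + a.2) (by simp)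
    fun b hb => by simpa [add_sub_add_comm] using (abs_le_one_of_hexSq_le_one (ht a ha b hb)).2.2
  simp only [Int.cast_one, Int.cast_zero, one_mul, zero_mul, add_zero, zero_add] at h₁ h₂ h₃
  exact Finset.mem_filter.mpr ⟨Finset.mem_product.mpr ⟨h₁, h₂⟩, h₃⟩

lemma IsPrimTriangle.eq_alcove (ht : IsPrimTriangle t) (hred : ∀ a ∈ t, ∀ b ∈ t, hexSq (b - a) ≤ 1)
    (hp : IsGeneric p) (hpt : p ∈ latticeHull t) : t = alcove p :=
  Finset.eq_of_subset_of_card_le (subset_alcove hp hpt hred)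
    ((card_alcove_le_three p).trans ht.card_eq_three.ge)

lemma IsGenericTriangulation.subset_of_hexReduced {T T' : Finset (Finset (ℤ × ℤ))}
    (hT : IsGenericTriangulation V T) (hT' : IsGenericTriangulation V T') (hred : HexReduced T)
    (hred' : HexReduced T') : T ⊆ T' := by
  intro t ht
  obtain ⟨p, hp, hpt⟩ := (hT.isPrimTriangle t ht).exists_isGeneric_mem
  obtain ⟨t', ht', hpt'⟩ := hT'.exists_mem p hp (latticeHull_mono (hT.subset t ht) hpt)
  rw [(hT.isPrimTriangle t ht).eq_alcove (hred t ht) hp hpt,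
    ← (hT'.isPrimTriangle t' ht').eq_alcove (hred' t' ht') hp hpt']
  exact ht'

end Alcove

lemma IsGenericTriangulation.reflTransGen_isFlip {V : Set (ℤ × ℤ)} {T T' : Finset (Finset (ℤ × ℤ))}
    (hV : HasShortBoundary V) (hT : IsGenericTriangulation V T)
    (hT' : IsGenericTriangulation V T') : Relation.ReflTransGen IsFlip T T' := by
  obtain ⟨S, hS, hred, hTS, -⟩ := hT.exists_hexReduced hV
  obtain ⟨S', hS', hred', -, hST'⟩ := hT'.exists_hexReduced hV
  obtain rfl : S = S' := (hS.subset_of_hexReduced hS' hred hred').antisymm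
    (hS'.subset_of_hexReduced hS hred' hred)
  exact hTS.trans hST'

section TdPts

variable {d : ℕ}

lemma mem_interior_latticeHull_TdPts {p : ℝ × ℝ} (h₁ : 0 < p.1) (h₂ : 0 < p.2)
    (hsum : p.1 + p.2 < d) : p ∈ interior (latticeHull (TdPts d)) := by
  have hopen : IsOpen {q : ℝ × ℝ | 0 < q.1 ∧ 0 < q.2 ∧ q.1 + q.2 < d} :=
    (isOpen_lt continuous_const continuous_fst).inter <|
      (isOpen_lt continuous_const continuous_snd).inter <|
        isOpen_lt (continuous_fst.add continuous_snd) continuous_const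
  refine interior_maximal ?_ hopen ⟨h₁, h₂, hsum⟩
  rintro q ⟨hq₁, hq₂, hq⟩
  have hcorners : ({(0, 0), ((d : ℝ), 0), (0, (d : ℝ))} : Set (ℝ × ℝ)) ⊆ toRp '' TdPts d := by
    rintro _ (rfl | rfl | rfl)
    exacts [⟨(0, 0), by simp [TdPts], by simp [toRp]⟩, ⟨(d, 0), by simp [TdPts], by simp [toRp]⟩,
      ⟨(0, d), by simp [TdPts], by simp [toRp]⟩]
  have hd : (0 : ℝ) < d := by linarith
  refine convexHull_mono hcorners ((mem_convexHull_triple_iff ?_ q).mpr ⟨?_, ?_, ?_⟩)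
  · simpa [orient] using hd.ne'
  · simpa [orient] using mul_nonneg hd.le hq₂.le
  · simp only [orient]; nlinarith
  · simpa [orient] using mul_nonneg hd.le hq₁.le

lemma hasShortBoundary_TdPts (d : ℕ) : HasShortBoundary (TdPts d) := by
  rintro ⟨x₁, x₂⟩ ⟨hx₁, hx₂, hx⟩ ⟨y₁, y₂⟩ ⟨hy₁, hy₂, hy⟩ z hz hlong
  simp only [orient, hexSq, Prod.mk_sub_mk] at hx₁ hx₂ hx hy₁ hy₂ hy hz hlong
  have sq_le_one {n m : ℤ} (h : n * m = 1) : n ^ 2 ≤ 1 := by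
    rcases Int.eq_one_or_neg_one_of_mul_eq_one h with rfl | rfl <;> norm_num
  have h₁ : 0 < x₁ + y₁ := by
    by_contra! h
    obtain ⟨rfl, rfl⟩ : x₁ = 0 ∧ y₁ = 0 := by lia
    linarith [sq_le_one (n := y₂ - x₂) (m := -z.1) (by linarith)]
  have h₂ : 0 < x₂ + y₂ := by
    by_contra! h
    obtain ⟨rfl, rfl⟩ : x₂ = 0 ∧ y₂ = 0 := by lia
    linarith [sq_le_one (n := y₁ - x₁) (m := z.2) (by linarith)]
  have hsum : x₁ + x₂ + (y₁ + y₂) < 2 * d := by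
    by_contra! h
    obtain ⟨rfl, rfl⟩ : x₂ = d - x₁ ∧ y₂ = d - y₁ := by lia
    linarith [sq_le_one (n := y₁ - x₁) (m := z.1 + z.2 - d) (by linarith)]
  rw [midpoint_eq_smul_add]
  have h₁' : (0 : ℝ) < x₁ + y₁ := by exact_mod_cast h₁
  have h₂' : (0 : ℝ) < x₂ + y₂ := by exact_mod_cast h₂
  have hsum' : (x₁ + x₂ + (y₁ + y₂) : ℝ) < 2 * d := by exact_mod_cast hsum
  apply mem_interior_latticeHull_TdPts <;>
    simp only [toRp, Prod.mk_add_mk, Prod.smul_mk, smul_eq_mul, invOf_eq_inv] <;> linarith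

end TdPts

theorem stmt_17_general (d : ℕ) (T T' : Finset (Finset (ℤ × ℤ))) (hT : IsPrimTriangulation d T)
    (hT' : IsPrimTriangulation d T') : Relation.ReflTransGen IsFlip T T' :=
  hT.isGenericTriangulation.reflTransGen_isFlip (hasShortBoundary_TdPts d)
    hT'.isGenericTriangulation

/-- Any two primitive regular integer triangulations of `T_d` are connected by
a finite sequence of flips. -/
theorem stmt_17 (d : ℕ) (hd : 1 ≤ d) (T T' : Finset (Finset (ℤ × ℤ)))
    (hT : IsPrimTriangulation d T) (hTreg : IsRegularTriangulation d T)
    (hT' : IsPrimTriangulation d T') (hT'reg : IsRegularTriangulation d T') :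
    Relation.ReflTransGen IsFlip T T' :=
  stmt_17_general d T T' hT hT'

end
end
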